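/- arXiv:1410.1294 — 6 statements merged into one kernel-verified Lean document; each statement's English description precedes it below -/
import Mathlib

section
/- Let X be a complex Hilbert space, let T ∈ B(X) be power-bounded, and let a ∈ ℓ¹(ℕ). Suppose that for every λ ∈ σ(T) ∩ 𝕋 one has (1/N)·‖∑_{n=0}^{N-1} conj(λ)ⁿ Tⁿ â(T)‖ → 0 as N → ∞ (operator norm). Then for every x ∈ X, ‖Tⁿ â(T) x‖ → 0 as n → ∞. (ℤ₊-instance of Proposition 3.6 of the paper.) -/
open Filter Topology

/-! Let `S` lie in the closed algebra generated by `T`. By spectral mapping and the ergodic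
condition on `S`, a polynomial `p` with `p(T)` close to `S` is small on `σ(T) ∩ 𝕋`. The partial sums
`∑_{n<N} conj(λ)ⁿ Tⁿ` at the `N`-th roots of unity `λ` form the discrete Fourier transform of
`n ↦ Tⁿ`. Up to errors bounded uniformly in `N` and `λ`, multiplying such a sum by `p(T)` multiplies
it by `p(λ)` (telescoping), and away from `σ(T) ∩ 𝕋` the sums are themselves bounded (resolvent).
Hence Parseval's identity makes the quadratic means of `‖Tⁿ p(T) x‖` small, uniformly in `‖x‖ ≤ 1`,
and power-boundedness turns this into smallness of `‖Tⁿ p(T)‖`. -/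

open Polynomial in
theorem exists_norm_sub_aeval_lt_of_mem_elemental {𝕜 A : Type*} [NormedField 𝕜] [NormedRing A]
    [NormedAlgebra 𝕜 A] {a b : A} (hb : b ∈ Algebra.elemental 𝕜 a) {ε : ℝ} (hε : 0 < ε) :
    ∃ p : 𝕜[X], ‖b - aeval a p‖ < ε := by
  obtain ⟨_, hadjoin, hdist⟩ := Metric.mem_closure_iff.1 hb ε hε
  rw [SetLike.mem_coe, Algebra.adjoin_singleton_eq_range_aeval] at hadjoin
  obtain ⟨p, rfl⟩ := hadjoin
  exact ⟨p, by rwa [← dist_eq_norm]⟩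

theorem tsum_smul_pow_mem_elemental {R A : Type*} [CommSemiring R] [Semiring A]
    [TopologicalSpace A] [IsTopologicalSemiring A] [Algebra R A] (a : A) (c : ℕ → R) :
    ∑' n, c n • a ^ n ∈ Algebra.elemental R a :=
  tsum_mem (Subalgebra.isClosed_topologicalClosure _) fun n =>
    Subalgebra.smul_mem _ (pow_mem (Algebra.elemental.self_mem R a) n) (c n)

open Finset in
theorem natCast_mul_norm_pow_apply_sq_le {𝕜 E : Type*} [NontriviallyNormedField 𝕜]
    [SeminormedAddCommGroup E] [NormedSpace 𝕜 E] {T : E →L[𝕜] E} {M : ℝ} (hM : ∀ n, ‖T ^ n‖ ≤ M)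
    (N : ℕ) (x : E) :
    N * ‖(T ^ N) x‖ ^ 2 ≤ M ^ 2 * ∑ n ∈ range N, ‖(T ^ n) x‖ ^ 2 := by
  have norm_pow_apply_le : ∀ n ∈ range N, ‖(T ^ N) x‖ ^ 2 ≤ M ^ 2 * ‖(T ^ n) x‖ ^ 2 := by
    intro n hn
    rw [← pow_sub_mul_pow T (mem_range.1 hn).le, ← mul_pow]
    gcongr
    exact (T ^ (N - n)).le_of_opNorm_le (hM _) _
  simpa [mul_sum] using card_nsmul_le_sum _ _ _ norm_pow_apply_le

section Parseval

open Finset Polynomial ComplexConjugate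

theorem sum_nthRootsFinset_conj_pow_mul_pow {N m n : ℕ} (hm : m < N) (hn : n < N) :
    ∑ z ∈ nthRootsFinset N (1 : ℂ), conj z ^ m * z ^ n = if m = n then (N : ℂ) else 0 := by
  have hN : 0 < N := m.zero_le.trans_lt hm
  have hζ := Complex.isPrimitiveRoot_exp N hN.ne'
  have conj_pow_mul_pow (z : ℂ) (hz : z ^ N = 1) (k : ℕ) : conj z ^ k * z ^ k = 1 := by
    rw [← mul_pow, Complex.conj_mul', Complex.norm_eq_one_of_pow_eq_one hz hN.ne']
    simp
  split_ifs with hmn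
  · subst hmn
    rw [sum_congr rfl fun z hz => conj_pow_mul_pow z ((mem_nthRootsFinset hN 1).1 hz) m]
    simp [hζ.card_nthRootsFinset]
  · set ζ := Complex.exp (2 * Real.pi * Complex.I / N)
    have factor_ne_one : conj ζ ^ m * ζ ^ n ≠ 1 := fun h => by
      rw [← conj_pow_mul_pow ζ hζ.pow_eq_one m] at h
      have conj_ne_zero := left_ne_zero_of_mul_eq_one (conj_pow_mul_pow ζ hζ.pow_eq_one m)
      exact hmn (hζ.pow_inj hn hm (mul_left_cancel₀ conj_ne_zero h)).symm
    have factor_mul_sum : conj ζ ^ m * ζ ^ n * ∑ z ∈ nthRootsFinset N (1 : ℂ), conj z ^ m * z ^ n =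
        ∑ z ∈ nthRootsFinset N (1 : ℂ), conj z ^ m * z ^ n := by
      rw [mul_sum]
      refine sum_equiv (Equiv.mulLeft₀ ζ (hζ.ne_zero hN.ne')) (fun z => ?_) fun z _ => ?_
      · simp [mem_nthRootsFinset hN, mul_pow, hζ.pow_eq_one]
      · simp only [Equiv.mulLeft₀_apply, map_mul, mul_pow]
        ring
    exact by_contra fun h => factor_ne_one ((mul_eq_right₀ h).1 factor_mul_sum)

theorem sum_nthRootsFinset_norm_sq_sum_conj_pow_smul {E : Type*} [SeminormedAddCommGroup E]
    [InnerProductSpace ℂ E] (N : ℕ) (y : ℕ → E) :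
    ∑ z ∈ nthRootsFinset N (1 : ℂ), ‖∑ n ∈ range N, conj z ^ n • y n‖ ^ 2 =
      N * ∑ n ∈ range N, ‖y n‖ ^ 2 := by
  have norm_sq_eq_inner (v : E) : (‖v‖ : ℂ) ^ 2 = inner ℂ v v :=
    (inner_self_eq_norm_sq_to_K (𝕜 := ℂ) v).symm
  rw [← Complex.ofReal_inj]
  push_cast
  calc ∑ z ∈ nthRootsFinset N (1 : ℂ), (‖∑ n ∈ range N, conj z ^ n • y n‖ : ℂ) ^ 2
    _ = ∑ z ∈ nthRootsFinset N (1 : ℂ), ∑ m ∈ range N, ∑ n ∈ range N,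
          (conj z ^ m * z ^ n) * inner ℂ (y n) (y m) := by
        simp only [norm_sq_eq_inner, sum_inner, inner_sum, inner_smul_left, inner_smul_right,
          map_pow, Complex.conj_conj, mul_sum, mul_assoc, mul_left_comm]
    _ = ∑ m ∈ range N, ∑ n ∈ range N,
          (∑ z ∈ nthRootsFinset N (1 : ℂ), conj z ^ m * z ^ n) * inner ℂ (y n) (y m) := by
        simp only [sum_mul]
        rw [sum_comm]
        exact sum_congr rfl fun m _ => sum_comm
    _ = ∑ m ∈ range N, ∑ n ∈ range N, (if m = n then (N : ℂ) else 0) * inner ℂ (y n) (y m) :=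
        sum_congr rfl fun m hm => sum_congr rfl fun n hn => by
          rw [sum_nthRootsFinset_conj_pow_mul_pow (mem_range.1 hm) (mem_range.1 hn)]
    _ = N * ∑ n ∈ range N, (‖y n‖ : ℂ) ^ 2 := by
        simp only [ite_mul, zero_mul, sum_ite_eq, mul_sum, norm_sq_eq_inner]
        exact sum_congr rfl fun m hm => if_pos hm

end Parseval

section RotatedSum

open Finset Polynomial ComplexConjugate

/-- The partial sum `∑_{n<N} conj(λ)ⁿ Tⁿ`. Divided by `N` it is a Cesàro mean of the powers of
`conj(λ) T`; for `λ` ranging over the `N`-th roots of unity it is the discrete Fourier transform of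
`n ↦ Tⁿ`. -/
def rotatedSum {A : Type*} [Semiring A] [Algebra ℂ A] (T : A) (lam : ℂ) (N : ℕ) : A :=
  ∑ n ∈ range N, conj lam ^ n • T ^ n

section Algebra

variable {A : Type*} [Ring A] [Algebra ℂ A]

theorem rotatedSum_mul_algebraMap_sub (T : A) {lam : ℂ} (hlam : ‖lam‖ = 1) {N : ℕ}
    (hN : lam ^ N = 1) :
    rotatedSum T lam N * (algebraMap ℂ A lam - T) = lam • (1 - T ^ N) := by
  have mul_conj : lam * conj lam = 1 := by simp [Complex.mul_conj', hlam]
  have factor : algebraMap ℂ A lam - T = lam • (1 - conj lam • T) := by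
    rw [smul_sub, smul_smul, mul_conj, one_smul, Algebra.algebraMap_eq_smul_one]
  simp only [rotatedSum, ← _root_.smul_pow]
  rw [factor, mul_smul_comm, geom_sum_mul_neg, _root_.smul_pow, ← map_pow, hN, map_one, one_smul]

theorem rotatedSum_mul (T S : A) (lam : ℂ) (N : ℕ) :
    rotatedSum T lam N * S = ∑ n ∈ range N, conj lam ^ n • (T ^ n * S) := by
  simp only [rotatedSum, sum_mul, smul_mul_assoc]

end Algebra

section NormedAlgebra

variable {A : Type*} [NormedRing A] [NormedAlgebra ℂ A] {T : A} {M : ℝ} {lam : ℂ} {N : ℕ}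

theorem norm_rotatedSum_le (hM : ∀ n, ‖T ^ n‖ ≤ M) (hlam : ‖lam‖ = 1) :
    ‖rotatedSum T lam N‖ ≤ N * M := by
  refine (norm_sum_le_of_le _ fun n _ => ?_).trans_eq (by rw [sum_const, card_range, nsmul_eq_mul])
  simpa [norm_smul, hlam] using hM n

theorem norm_rotatedSum_mul_algebraMap_sub_le (hM : ∀ n, ‖T ^ n‖ ≤ M) (hlam : ‖lam‖ = 1)
    (hN : lam ^ N = 1) : ‖rotatedSum T lam N * (algebraMap ℂ A lam - T)‖ ≤ 2 * M := by
  rw [rotatedSum_mul_algebraMap_sub T hlam hN, norm_smul, hlam, one_mul, two_mul]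
  exact norm_sub_le_of_le (by simpa using hM 0) (hM N)

theorem exists_norm_rotatedSum_mul_aeval_sub_le (hM : ∀ n, ‖T ^ n‖ ≤ M) (p : ℂ[X]) :
    ∃ C, ∀ (lam : ℂ) (N : ℕ), ‖lam‖ = 1 → lam ^ N = 1 →
      ‖rotatedSum T lam N * (aeval T p - algebraMap ℂ A (p.eval lam))‖ ≤ C := by
  induction p using Polynomial.induction_on with
  | C c => exact ⟨0, by simp⟩
  | add p q hp hq =>
    obtain ⟨C, hC⟩ := hp
    obtain ⟨D, hD⟩ := hq
    refine ⟨C + D, fun lam N hlam hN => ?_⟩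
    rw [map_add, eval_add, map_add, add_sub_add_comm, mul_add]
    exact norm_add_le_of_le (hC lam N hlam hN) (hD lam N hlam hN)
  | monomial n c ih =>
    obtain ⟨C, hC⟩ := ih
    refine ⟨C * ‖T‖ + ‖c‖ * (2 * M), fun lam N hlam hN => ?_⟩
    set q : ℂ[X] := Polynomial.C c * X ^ n
    have split : aeval T (q * X) - algebraMap ℂ A ((q * X).eval lam) =
        (aeval T q - algebraMap ℂ A (q.eval lam)) * T -
          q.eval lam • (algebraMap ℂ A lam - T) := by
      simp only [map_mul, aeval_X, eval_mul, eval_X, Algebra.smul_def]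
      noncomm_ring
    have norm_eval : ‖q.eval lam‖ = ‖c‖ := by simp [q, hlam]
    rw [pow_succ, ← mul_assoc, split, mul_sub, ← mul_assoc, mul_smul_comm]
    refine norm_sub_le_of_le (norm_mul_le_of_le (hC lam N hlam hN) le_rfl) ?_
    rw [norm_smul, norm_eval]
    gcongr
    exact norm_rotatedSum_mul_algebraMap_sub_le hM hlam hN

variable [CompleteSpace A]

theorem exists_norm_rotatedSum_le_of_isCompact (hM : ∀ n, ‖T ^ n‖ ≤ M) {K : Set ℂ}
    (hK : IsCompact K) (hKT : K ⊆ resolventSet ℂ T) :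
    ∃ C, ∀ lam ∈ K, ∀ N : ℕ, ‖lam‖ = 1 → lam ^ N = 1 → ‖rotatedSum T lam N‖ ≤ C := by
  have continuousOn_resolvent : ContinuousOn (resolvent T) K := fun lam hlam =>
    (spectrum.hasDerivAt_resolvent_const_left (hKT hlam)).continuousAt.continuousWithinAt
  obtain ⟨R, hR⟩ := hK.exists_bound_of_continuousOn continuousOn_resolvent
  refine ⟨2 * M * R, fun lam hlamK N hlam hN => ?_⟩
  have eq_mul_resolvent : rotatedSum T lam N =
      rotatedSum T lam N * (algebraMap ℂ A lam - T) * resolvent T lam := by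
    rw [mul_assoc, resolvent, Ring.mul_inverse_cancel _ (hKT hlamK), mul_one]
  rw [eq_mul_resolvent]
  exact norm_mul_le_of_le (norm_rotatedSum_mul_algebraMap_sub_le hM hlam hN) (hR lam hlamK)

theorem natCast_mul_norm_eval_le_of_mem_spectrum (hlam : ‖lam‖ = 1) (hspec : lam ∈ spectrum ℂ T)
    (p : ℂ[X]) (N : ℕ) :
    N * ‖p.eval lam‖ ≤ ‖rotatedSum T lam N * aeval T p‖ * ‖(1 : A)‖ := by
  let q : ℂ[X] := ∑ n ∈ range N, monomial n (conj lam ^ n)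
  have aeval_q : aeval T q = rotatedSum T lam N := by
    simp [q, rotatedSum, aeval_monomial, Algebra.smul_def]
  have eval_q : q.eval lam = N := by
    simp [q, eval_finsetSum, ← mul_pow, Complex.conj_mul', hlam]
  have eval_mem : (q * p).eval lam ∈ spectrum ℂ (aeval T (q * p)) :=
    spectrum.subset_polynomial_aeval T (q * p) ⟨lam, hspec, rfl⟩
  simpa only [eval_mul, eval_q, map_mul, aeval_q, norm_mul, Complex.norm_natCast] using
    spectrum.norm_le_norm_mul_of_mem eval_mem

theorem norm_eval_le_of_tendsto_rotatedSum (hM : ∀ n, ‖T ^ n‖ ≤ M) (hlam : ‖lam‖ = 1)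
    (hspec : lam ∈ spectrum ℂ T) {S : A}
    (h : Tendsto (fun N : ℕ => 1 / (N : ℝ) * ‖rotatedSum T lam N * S‖) atTop (𝓝 0)) (p : ℂ[X]) :
    ‖p.eval lam‖ ≤ M * ‖S - aeval T p‖ * ‖(1 : A)‖ := by
  have hlim := (h.add_const (M * ‖S - aeval T p‖)).mul_const ‖(1 : A)‖
  rw [zero_add] at hlim
  refine ge_of_tendsto hlim ?_
  filter_upwards [eventually_gt_atTop 0] with N hN
  have hN' : (0 : ℝ) < N := Nat.cast_pos.2 hN
  have norm_mul_aeval_le : ‖rotatedSum T lam N * aeval T p‖ ≤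
      ‖rotatedSum T lam N * S‖ + N * M * ‖S - aeval T p‖ := by
    rw [← sub_sub_cancel S (aeval T p), mul_sub, sub_sub_cancel]
    exact norm_sub_le_of_le le_rfl (norm_mul_le_of_le (norm_rotatedSum_le hM hlam) le_rfl)
  refine le_of_mul_le_mul_left ?_ hN'
  calc N * ‖p.eval lam‖ ≤ ‖rotatedSum T lam N * aeval T p‖ * ‖(1 : A)‖ :=
        natCast_mul_norm_eval_le_of_mem_spectrum hlam hspec p N
    _ ≤ (‖rotatedSum T lam N * S‖ + N * M * ‖S - aeval T p‖) * ‖(1 : A)‖ := by gcongr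
    _ = N * ((1 / N * ‖rotatedSum T lam N * S‖ + M * ‖S - aeval T p‖) * ‖(1 : A)‖) := by
        field_simp

end NormedAlgebra

section BanachSpace

variable {E : Type*} [NormedAddCommGroup E] [NormedSpace ℂ E] {T : E →L[ℂ] E} {M : ℝ}

theorem rotatedSum_apply (T : E →L[ℂ] E) (lam : ℂ) (N : ℕ) (x : E) :
    rotatedSum T lam N x = ∑ n ∈ range N, conj lam ^ n • (T ^ n) x := by
  simp [rotatedSum]

theorem exists_norm_rotatedSum_aeval_apply_le [CompleteSpace E] (hM : ∀ n, ‖T ^ n‖ ≤ M)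
    {p : ℂ[X]} {δ : ℝ} (hδ : 0 ≤ δ) (hp : ∀ lam ∈ spectrum ℂ T, ‖lam‖ = 1 → ‖p.eval lam‖ < δ) :
    ∃ C, ∀ (lam : ℂ) (N : ℕ) (x : E), ‖lam‖ = 1 → lam ^ N = 1 →
      ‖rotatedSum T lam N (aeval T p x)‖ ≤ δ * ‖rotatedSum T lam N x‖ + C * ‖x‖ := by
  let K : Set ℂ := Metric.sphere 0 1 ∩ {lam | δ ≤ ‖p.eval lam‖}
  have isCompact_K : IsCompact K :=
    (isCompact_sphere 0 1).inter_right (isClosed_le continuous_const p.continuous.norm)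
  have K_subset : K ⊆ resolventSet ℂ T := fun lam hlam => by
    by_contra hspec
    exact (hp lam hspec (by simpa using hlam.1)).not_ge hlam.2
  obtain ⟨C, hC⟩ := exists_norm_rotatedSum_mul_aeval_sub_le hM p
  obtain ⟨D, hD⟩ := exists_norm_rotatedSum_le_of_isCompact hM isCompact_K K_subset
  refine ⟨max C (D * ‖aeval T p‖), fun lam N x hlam hN => ?_⟩
  set F := rotatedSum T lam N
  rcases lt_or_ge ‖p.eval lam‖ δ with hsmall | hlarge
  · calc ‖F (aeval T p x)‖
      _ = ‖p.eval lam • F x + (F * (aeval T p - algebraMap ℂ _ (p.eval lam))) x‖ := by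
          simp [Algebra.algebraMap_eq_smul_one]
      _ ≤ δ * ‖F x‖ + max C (D * ‖aeval T p‖) * ‖x‖ := by
          refine norm_add_le_of_le ?_ (ContinuousLinearMap.le_of_opNorm_le _
            ((hC lam N hlam hN).trans (le_max_left _ _)) x)
          rw [norm_smul]
          gcongr
  · have norm_mul_le : ‖F * aeval T p‖ ≤ D * ‖aeval T p‖ :=
      norm_mul_le_of_le (hD lam ⟨by simpa using hlam, hlarge⟩ N hlam hN) le_rfl
    calc ‖F (aeval T p x)‖ = ‖(F * aeval T p) x‖ := rfl
      _ ≤ max C (D * ‖aeval T p‖) * ‖x‖ :=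
          ContinuousLinearMap.le_of_opNorm_le _ (norm_mul_le.trans (le_max_right _ _)) x
      _ ≤ δ * ‖F x‖ + max C (D * ‖aeval T p‖) * ‖x‖ := le_add_of_nonneg_left (by positivity)

end BanachSpace

section HilbertSpace

variable {E : Type*} [NormedAddCommGroup E] [InnerProductSpace ℂ E] {T : E →L[ℂ] E} {M : ℝ}

theorem sum_nthRootsFinset_norm_rotatedSum_sq (T : E →L[ℂ] E) (N : ℕ) (x : E) :
    ∑ z ∈ nthRootsFinset N (1 : ℂ), ‖rotatedSum T z N x‖ ^ 2 =
      N * ∑ n ∈ range N, ‖(T ^ n) x‖ ^ 2 := by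
  simp only [rotatedSum_apply]
  exact sum_nthRootsFinset_norm_sq_sum_conj_pow_smul N fun n => (T ^ n) x

theorem sum_nthRootsFinset_norm_rotatedSum_sq_le (hM : ∀ n, ‖T ^ n‖ ≤ M) (N : ℕ) (x : E) :
    ∑ z ∈ nthRootsFinset N (1 : ℂ), ‖rotatedSum T z N x‖ ^ 2 ≤ (N * M * ‖x‖) ^ 2 := by
  have sum_le : ∑ n ∈ range N, ‖(T ^ n) x‖ ^ 2 ≤ N * (M * ‖x‖) ^ 2 := by
    refine (sum_le_card_nsmul _ _ ((M * ‖x‖) ^ 2) fun n _ => ?_).trans_eq (by simp)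
    gcongr
    exact (T ^ n).le_of_opNorm_le (hM n) x
  calc _ = N * ∑ n ∈ range N, ‖(T ^ n) x‖ ^ 2 := sum_nthRootsFinset_norm_rotatedSum_sq T N x
    _ ≤ N * (N * (M * ‖x‖) ^ 2) := by gcongr
    _ = (N * M * ‖x‖) ^ 2 := by ring

theorem natCast_sq_mul_norm_pow_apply_sq_le (hM : ∀ n, ‖T ^ n‖ ≤ M) (N : ℕ) (x : E) :
    (N : ℝ) ^ 2 * ‖(T ^ N) x‖ ^ 2 ≤
      M ^ 2 * ∑ z ∈ nthRootsFinset N (1 : ℂ), ‖rotatedSum T z N x‖ ^ 2 :=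
  calc (N : ℝ) ^ 2 * ‖(T ^ N) x‖ ^ 2 = N * (N * ‖(T ^ N) x‖ ^ 2) := by ring
    _ ≤ N * (M ^ 2 * ∑ n ∈ range N, ‖(T ^ n) x‖ ^ 2) := by
        gcongr N * ?_; exact natCast_mul_norm_pow_apply_sq_le hM N x
    _ = M ^ 2 * ∑ z ∈ nthRootsFinset N (1 : ℂ), ‖rotatedSum T z N x‖ ^ 2 := by
        rw [sum_nthRootsFinset_norm_rotatedSum_sq, mul_left_comm]

variable [CompleteSpace E]

theorem exists_norm_pow_aeval_apply_sq_le (hM : ∀ n, ‖T ^ n‖ ≤ M) {p : ℂ[X]} {δ : ℝ}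
    (hδ : 0 ≤ δ) (hp : ∀ lam ∈ spectrum ℂ T, ‖lam‖ = 1 → ‖p.eval lam‖ < δ) :
    ∃ C, ∀ (N : ℕ) (x : E), 0 < N →
      ‖(T ^ N) (aeval T p x)‖ ^ 2 ≤ 2 * M ^ 2 * ((δ * M) ^ 2 + C / N) * ‖x‖ ^ 2 := by
  obtain ⟨C, hC⟩ := exists_norm_rotatedSum_aeval_apply_le hM hδ hp
  refine ⟨C ^ 2, fun N x hN => ?_⟩
  have norm_rotatedSum_sq_le : ∀ z ∈ nthRootsFinset N (1 : ℂ),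
      ‖rotatedSum T z N (aeval T p x)‖ ^ 2 ≤
        2 * (δ ^ 2 * ‖rotatedSum T z N x‖ ^ 2 + (C * ‖x‖) ^ 2) := by
    intro z hz
    have pow_eq_one := (mem_nthRootsFinset hN 1).1 hz
    rw [← mul_pow]
    refine le_trans ?_ add_sq_le
    gcongr
    exact hC z N x (Complex.norm_eq_one_of_pow_eq_one pow_eq_one hN.ne') pow_eq_one
  refine le_of_mul_le_mul_left ?_ (pow_pos (Nat.cast_pos.2 hN : (0 : ℝ) < N) 2)
  calc (N : ℝ) ^ 2 * ‖(T ^ N) (aeval T p x)‖ ^ 2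
    _ ≤ M ^ 2 * ∑ z ∈ nthRootsFinset N (1 : ℂ), ‖rotatedSum T z N (aeval T p x)‖ ^ 2 :=
        natCast_sq_mul_norm_pow_apply_sq_le hM N _
    _ ≤ M ^ 2 * ∑ z ∈ nthRootsFinset N (1 : ℂ),
          2 * (δ ^ 2 * ‖rotatedSum T z N x‖ ^ 2 + (C * ‖x‖) ^ 2) := by
        gcongr with z hz; exact norm_rotatedSum_sq_le z hz
    _ = 2 * M ^ 2 * (δ ^ 2 * ∑ z ∈ nthRootsFinset N (1 : ℂ), ‖rotatedSum T z N x‖ ^ 2 +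
          N * (C * ‖x‖) ^ 2) := by
        rw [← mul_sum, sum_add_distrib, ← mul_sum, sum_const,
          (Complex.isPrimitiveRoot_exp N hN.ne').card_nthRootsFinset, nsmul_eq_mul]
        ring
    _ ≤ 2 * M ^ 2 * (δ ^ 2 * (N * M * ‖x‖) ^ 2 + N * (C * ‖x‖) ^ 2) := by
        gcongr; exact sum_nthRootsFinset_norm_rotatedSum_sq_le hM N x
    _ = N ^ 2 * (2 * M ^ 2 * ((δ * M) ^ 2 + C ^ 2 / N) * ‖x‖ ^ 2) := by field_simp

theorem eventually_norm_pow_mul_aeval_le (hM : ∀ n, ‖T ^ n‖ ≤ M) {p : ℂ[X]} {δ : ℝ} (hδ : 0 < δ)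
    (hp : ∀ lam ∈ spectrum ℂ T, ‖lam‖ = 1 → ‖p.eval lam‖ < δ) :
    ∀ᶠ n in atTop, ‖T ^ n * aeval T p‖ ≤ 2 * M * (M + 1) * δ := by
  have hM0 : 0 ≤ M := (norm_nonneg _).trans (hM 0)
  obtain ⟨C, hC⟩ := exists_norm_pow_aeval_apply_sq_le hM hδ.le hp
  filter_upwards [eventually_gt_atTop 0,
    (tendsto_const_div_atTop_nhds_zero_nat C).eventually_le_const (pow_pos hδ 2)] with n hn hCn
  refine ContinuousLinearMap.opNorm_le_bound _ (by positivity) fun x => ?_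
  refine le_of_sq_le_sq ?_ (by positivity)
  calc ‖(T ^ n) (aeval T p x)‖ ^ 2
    _ ≤ 2 * M ^ 2 * ((δ * M) ^ 2 + C / n) * ‖x‖ ^ 2 := hC n x hn
    _ ≤ 2 * M ^ 2 * ((δ * M) ^ 2 + δ ^ 2) * ‖x‖ ^ 2 := by gcongr
    _ ≤ 2 * M ^ 2 * ((δ * M) ^ 2 + δ ^ 2) * ‖x‖ ^ 2 +
          2 * M ^ 2 * δ ^ 2 * (M ^ 2 + 4 * M + 1) * ‖x‖ ^ 2 :=
        le_add_of_nonneg_right (by positivity)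
    _ = (2 * M * (M + 1) * δ * ‖x‖) ^ 2 := by ring

end HilbertSpace

end RotatedSum

open ComplexConjugate in
theorem stmt_4_general {X : Type*} [NormedAddCommGroup X] [InnerProductSpace ℂ X] [CompleteSpace X]
    {T : X →L[ℂ] X} (hT : ∃ M : ℝ, ∀ n : ℕ, ‖T ^ n‖ ≤ M)
    {S : X →L[ℂ] X} (hS : S ∈ Algebra.elemental ℂ T)
    (h : ∀ lam ∈ spectrum ℂ T, ‖lam‖ = 1 →
      Tendsto (fun N : ℕ => 1 / (N : ℝ) * ‖∑ n ∈ Finset.range N, conj lam ^ n • (T ^ n * S)‖)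
        atTop (𝓝 0)) :
    Tendsto (fun n : ℕ => ‖T ^ n * S‖) atTop (𝓝 0) := by
  obtain ⟨M, hM⟩ := hT
  have hM0 : 0 ≤ M := (norm_nonneg _).trans (hM 0)
  simp only [← rotatedSum_mul] at h
  let c : ℝ := M + 2 * M * (M + 1) * (M ^ 2 + 1)
  rw [Metric.tendsto_nhds]
  intro η hη
  obtain ⟨ε, hε, hεη⟩ : ∃ ε > 0, c * ε < η := exists_pos_mul_lt hη c
  obtain ⟨p, hpS⟩ := exists_norm_sub_aeval_lt_of_mem_elemental hS hε
  have norm_eval_lt : ∀ lam ∈ spectrum ℂ T, ‖lam‖ = 1 → ‖p.eval lam‖ < (M ^ 2 + 1) * ε := by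
    intro lam hspec hlam
    calc ‖p.eval lam‖ ≤ M * ‖S - Polynomial.aeval T p‖ * ‖(1 : X →L[ℂ] X)‖ :=
          norm_eval_le_of_tendsto_rotatedSum hM hlam hspec (h lam hspec hlam) p
      _ ≤ M * ε * M := by gcongr; exact hM 0
      _ < (M ^ 2 + 1) * ε := by linarith
  filter_upwards [eventually_norm_pow_mul_aeval_le hM (by positivity) norm_eval_lt] with n hn
  rw [dist_zero_right, norm_norm]
  calc ‖T ^ n * S‖ = ‖T ^ n * (S - Polynomial.aeval T p) + T ^ n * Polynomial.aeval T p‖ := by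
        rw [← mul_add, sub_add_cancel]
    _ ≤ M * ε + 2 * M * (M + 1) * ((M ^ 2 + 1) * ε) :=
        norm_add_le_of_le (norm_mul_le_of_le (hM n) hpS.le) hn
    _ = c * ε := by ring
    _ < η := hεη

/-- ℤ₊-instance of Proposition 3.6: if `T` is power-bounded on a complex Hilbert space,
`a ∈ ℓ¹(ℕ)`, and for every `λ ∈ σ(T) ∩ 𝕋` the Cesàro averages
`(1/N)·‖∑_{n<N} conj(λ)ⁿ Tⁿ â(T)‖` tend to `0`, then `‖Tⁿ â(T) x‖ → 0` for every `x`. -/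
theorem stmt_4 {X : Type*} [NormedAddCommGroup X] [InnerProductSpace ℂ X] [CompleteSpace X]
    (T : X →L[ℂ] X) (hT : ∃ M : ℝ, ∀ n : ℕ, ‖T ^ n‖ ≤ M)
    (a : ℕ → ℂ) (ha : Summable fun n : ℕ => ‖a n‖)
    (h : ∀ lam ∈ spectrum ℂ T, ‖lam‖ = 1 →
      Tendsto (fun N : ℕ =>
          (1 / (N : ℝ)) * ‖∑ n ∈ Finset.range N, (starRingEnd ℂ lam) ^ n •
            (T ^ n * (∑' m : ℕ, a m • T ^ m))‖)
        atTop (nhds 0)) :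
    ∀ x : X, Tendsto (fun n : ℕ => ‖(T ^ n) ((∑' m : ℕ, a m • T ^ m) x)‖) atTop (nhds 0) := by
  exact fun x => squeeze_zero (fun _ => norm_nonneg _) (fun n => (T ^ n * _).le_opNorm x)
    (by simpa using (stmt_4_general hT (tsum_smul_pow_mem_elemental T a) h).mul_const ‖x‖)
end

section
/- Let X be a complex Hilbert space, let T ∈ B(X) be power-bounded, and let a ∈ ℓ¹(ℕ). Suppose that for every λ ∈ σ(T) ∩ 𝕋 one has (1/N)·‖∑_{n=0}^{N-1} conj(λ)ⁿ Tⁿ â(T)‖ → 0 as N → ∞ (operator norm). Then ‖Tⁿ â(T)‖ → 0 as n → ∞ in the operator norm. (ℤ₊-instance of Proposition 3.7 of the paper.) -/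
open Filter Topology

/-!
By spectral inclusion the Cesàro hypothesis forces `â = 0` on `σ(T) ∩ 𝕋`. If `𝕋 ⊆ σ(T)`, then
`a = 0` by uniqueness of Fourier coefficients. Otherwise choose unit-ball vectors `x N` almost
norming `T ^ N â(T)`. An ultrafilter limit of the averages
`(1 / N) ∑_{m < N} ⟪s (T ^ m (x N)), r (T ^ m (x N))⟫` is a semi-inner product on the commutant
of `T`. Left multiplication by the commutant acts boundedly on the associated Hilbert space, and
`T` acts as an isometry `V`. Since `σ(V) ⊆ σ(T)` misses a point of `𝕋`, `V` is unitary, so the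
continuous functional calculus gives `â(V) = 0`, i.e. the averages of `‖â(T) (T ^ m (x N))‖ ^ 2`
tend to `0`. By power-boundedness these averages dominate a multiple of `‖T ^ N â(T)‖ ^ 2`.
-/

namespace KatznelsonTzafriri

section SpectralInclusion

variable {𝕜 A : Type*} [NormedRing A] [CompleteSpace A]

theorem mem_spectrum_of_tendsto_aeval [NormedField 𝕜] [NormedAlgebra 𝕜 A] {ι : Type*}
    {l : Filter ι} [l.NeBot] {p : ι → Polynomial 𝕜} {T b : A} {z w : 𝕜} (hz : z ∈ spectrum 𝕜 T)
    (hw : Tendsto (fun i => (p i).eval z) l (𝓝 w))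
    (hb : Tendsto (fun i => Polynomial.aeval T (p i)) l (𝓝 b)) : w ∈ spectrum 𝕜 b :=
  nonunits.isClosed.mem_of_tendsto
    ((((continuous_algebraMap 𝕜 A).tendsto w).comp hw).sub hb)
    (.of_forall fun i => spectrum.subset_polynomial_aeval T (p i) ⟨z, hz, rfl⟩)

theorem eval_mul_mem_spectrum_aeval_mul [NormedField 𝕜] [NormedAlgebra 𝕜 A] {a : ℕ → 𝕜}
    {T b : A} {z w : 𝕜} (hz : z ∈ spectrum 𝕜 T) (hw : HasSum (fun n => a n * z ^ n) w)
    (hb : HasSum (fun n => a n • T ^ n) b) (q : Polynomial 𝕜) :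
    q.eval z * w ∈ spectrum 𝕜 (Polynomial.aeval T q * b) := by
  refine mem_spectrum_of_tendsto_aeval hz (l := atTop)
    (p := fun K => q * ∑ m ∈ Finset.range K, Polynomial.monomial m (a m)) ?_ ?_
  · simpa [Polynomial.eval_finsetSum] using hw.tendsto_sum_nat.const_mul (q.eval z)
  · simpa [Polynomial.aeval_monomial, Algebra.smul_def] using
      hb.tendsto_sum_nat.const_mul (Polynomial.aeval T q)

theorem eq_zero_of_tendsto_cesaro [RCLike 𝕜] [NormedAlgebra 𝕜 A] {a : ℕ → 𝕜} {T b : A}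
    {z w : 𝕜} (hz : z ∈ spectrum 𝕜 T) (hz_norm : ‖z‖ = 1)
    (hw : HasSum (fun n => a n * z ^ n) w) (hb : HasSum (fun n => a n • T ^ n) b)
    (h : Tendsto (fun N : ℕ =>
      1 / (N : ℝ) * ‖∑ n ∈ Finset.range N, (starRingEnd 𝕜 z) ^ n • (T ^ n * b)‖) atTop (𝓝 0)) :
    w = 0 := by
  have hconj : starRingEnd 𝕜 z * z = 1 := by simp [RCLike.conj_mul, hz_norm]
  have hmem (N : ℕ) :
      N * w ∈ spectrum 𝕜 (∑ n ∈ Finset.range N, (starRingEnd 𝕜 z) ^ n • (T ^ n * b)) := by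
    simpa [Polynomial.eval_finsetSum, ← mul_pow, hconj, Polynomial.aeval_monomial,
      Algebra.smul_def, Finset.sum_mul, mul_assoc] using
      eval_mul_mem_spectrum_aeval_mul hz hw hb
        (∑ n ∈ Finset.range N, Polynomial.monomial n ((starRingEnd 𝕜 z) ^ n))
  have hle : ‖w‖ ≤ 0 * ‖(1 : A)‖ := by
    refine ge_of_tendsto (h.mul_const ‖(1 : A)‖) ?_
    filter_upwards [eventually_gt_atTop 0] with N hN
    have hN' : (0 : ℝ) < N := by exact_mod_cast hN
    rw [mul_assoc, one_div, le_inv_mul_iff₀ hN']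
    simpa using spectrum.norm_le_norm_mul_of_mem (hmem N)
  simpa using hle

end SpectralInclusion

section Fourier

theorem inner_eq_of_hasSum_smul {𝕜 E ι : Type*} [RCLike 𝕜] [SeminormedAddCommGroup E]
    [InnerProductSpace 𝕜 E] {v : ι → E} (hv : Orthonormal 𝕜 v) {a : ι → 𝕜} {x : E}
    (hx : HasSum (fun i => a i • v i) x) (k : ι) : inner 𝕜 (v k) x = a k := by
  classical
  have hsum : HasSum (fun i => a i * if k = i then 1 else 0) (inner 𝕜 (v k) x) := by
    simpa [inner_smul_right, orthonormal_iff_ite.1 hv] using hx.mapL (innerSL 𝕜 (v k))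
  simpa using hsum.unique (hasSum_single k fun i hi => by simp [hi.symm])

theorem eq_zero_of_tsum_mul_pow_eq_zero {a : ℕ → ℂ} (ha : Summable fun n => ‖a n‖)
    (h : ∀ z : ℂ, ‖z‖ = 1 → ∑' n, a n * z ^ n = 0) : a = 0 := by
  have hsum : Summable fun n : ℕ => a n • (fourier n : C(UnitAddCircle, ℂ)) :=
    .of_norm (by simpa [norm_smul, fourier_norm] using ha)
  have hzero : ∑' n : ℕ, a n • (fourier n : C(UnitAddCircle, ℂ)) = 0 := by
    ext y
    rw [← ContinuousMap.tsum_apply hsum]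
    simpa [fourier_apply, AddCircle.toCircle_nsmul] using h y.toCircle (Circle.norm_coe _)
  have hLp := (hzero ▸ hsum.hasSum).mapL
    (ContinuousMap.toLp (E := ℂ) 2 AddCircle.haarAddCircle ℂ)
  simp only [map_smul, map_zero] at hLp
  ext k
  simpa using (inner_eq_of_hasSum_smul
    ((orthonormal_fourier (T := 1)).comp _ Nat.cast_injective) hLp k).symm

end Fourier

section Unitary

theorem mem_unitary_of_star_mul_self_of_notMem_spectrum {B : Type*} [Ring B] [StarRing B]
    [Algebra ℂ B] [StarModule ℂ B] {V : B} (hV : star V * V = 1) {z : ℂ} (hz_norm : ‖z‖ = 1)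
    (hz : z ∉ spectrum ℂ V) : V ∈ unitary B := by
  rw [spectrum.notMem_iff] at hz
  have hz_conj : z * star z = 1 := by simp [Complex.mul_conj', hz_norm]
  have hfactor : star V * (algebraMap ℂ B z - V) =
      -(algebraMap ℂ B z * star (algebraMap ℂ B z - V)) := by
    rw [mul_sub, hV, star_sub, ← algebraMap_star_comm, mul_sub, ← map_mul, hz_conj, map_one,
      neg_sub, Algebra.commutes]
  have hz_unit : IsUnit (algebraMap ℂ B z) :=
    (IsUnit.of_mul_eq_one _ hz_conj).map (algebraMap ℂ B)
  have hVstar : IsUnit (star V) := by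
    rw [← hz.mul_right_iff, hfactor]
    exact (hz_unit.mul hz.star).neg
  exact (IsUnit.mem_unitary_iff_star_mul_self (isUnit_star.1 hVstar)).2 hV

theorem hasSum_smul_pow_zero_of_isStarNormal {B : Type*} [CStarAlgebra B] {V : B}
    (hV : IsStarNormal V) (hdisc : ∀ z ∈ spectrum ℂ V, ‖z‖ ≤ 1) {a : ℕ → ℂ}
    (ha : Summable fun n => ‖a n‖) (h : ∀ z ∈ spectrum ℂ V, ∑' n, a n * z ^ n = 0) :
    HasSum (fun n => a n • V ^ n) 0 := by
  let g : C(spectrum ℂ V, ℂ) := (ContinuousMap.id ℂ).restrict (spectrum ℂ V)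
  have hsum : Summable fun n => a n • g ^ n := by
    refine ha.of_norm_bounded fun n => (ContinuousMap.norm_le _ (norm_nonneg _)).2 fun z => ?_
    simpa [g] using mul_le_of_le_one_right (norm_nonneg (a n))
      (pow_le_one₀ (norm_nonneg _) (hdisc z z.2))
  have hzero : ∑' n, a n • g ^ n = 0 := by
    ext z
    rw [← ContinuousMap.tsum_apply hsum]
    simpa [g] using h z z.2
  have hmap := (hzero ▸ hsum.hasSum).map (cfcHom hV) (cfcHom_continuous hV)
  simpa only [Function.comp_def, map_smul, map_pow, map_zero, g, cfcHom_id] using hmap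

theorem map_eq_zero_of_isometry {A B : Type*} [Ring A] [Algebra ℂ A] [TopologicalSpace A]
    [CStarAlgebra B] (ψ : A →ₐ[ℂ] B) (hψ : Continuous ψ) {t q : A}
    (ht : star (ψ t) * ψ t = 1) {z₀ : ℂ} (hz₀ : ‖z₀‖ = 1) (hz₀t : z₀ ∉ spectrum ℂ t)
    {a : ℕ → ℂ} (ha : Summable fun n => ‖a n‖)
    (h : ∀ z ∈ spectrum ℂ t, ‖z‖ = 1 → ∑' n, a n * z ^ n = 0)
    (hq : HasSum (fun n => a n • t ^ n) q) : ψ q = 0 := by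
  have hspec : spectrum ℂ (ψ t) ⊆ spectrum ℂ t := AlgHom.spectrum_apply_subset ψ t
  have hunitary : ψ t ∈ unitary B :=
    mem_unitary_of_star_mul_self_of_notMem_spectrum ht hz₀ fun hz => hz₀t (hspec hz)
  have hcircle : ∀ z ∈ spectrum ℂ (ψ t), ‖z‖ = 1 := fun z hz => by
    simpa using spectrum.subset_circle_of_unitary hunitary hz
  have hsum := hq.map ψ hψ
  simp only [Function.comp_def, map_smul, map_pow] at hsum
  exact hsum.unique (hasSum_smul_pow_zero_of_isStarNormal (isStarNormal_of_mem_unitary hunitary)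
    (fun z hz => (hcircle z hz).le) ha fun z hz => h z (hspec hz) (hcircle z hz))

end Unitary

section Representation

theorem exists_algHom_of_denseRange {𝕜 A F H : Type*} [NontriviallyNormedField 𝕜] [Ring A]
    [Algebra 𝕜 A] [AddCommGroup F] [Module 𝕜 F] [NormedAddCommGroup H]
    [NormedSpace 𝕜 H] [CompleteSpace H] {j : F →ₗ[𝕜] H} (hj : DenseRange j)
    (σ : A →ₐ[𝕜] Module.End 𝕜 F) {C : A → ℝ} (hC : ∀ r x, ‖j (σ r x)‖ ≤ C r * ‖j x‖) :
    ∃ ψ : A →ₐ[𝕜] (H →L[𝕜] H),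
      (∀ r x, ψ r (j x) = j (σ r x)) ∧ ∀ r y, ‖ψ r y‖ ≤ C r * ‖y‖ := by
  let extension (r : A) : H →L[𝕜] H := (j ∘ₗ σ r).extendOfNorm j
  have hext (r : A) (x : F) : extension r (j x) = j (σ r x) :=
    LinearMap.extendOfNorm_eq hj ⟨C r, hC r⟩ x
  have heq {f g : H →L[𝕜] H} (hfg : ∀ x, f (j x) = g (j x)) : f = g :=
    DFunLike.coe_injective (hj.equalizer f.continuous g.continuous (funext hfg))
  let ψ : A →ₐ[𝕜] (H →L[𝕜] H) := AlgHom.ofLinearMap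
    { toFun := extension
      map_add' := fun r s => heq fun x => by simp [hext]
      map_smul' := fun z r => heq fun x => by simp [hext] }
    (heq fun x => by simp [hext]) (fun r s => heq fun x => by simp [hext])
  exact ⟨ψ, hext, fun r y => LinearMap.norm_extendOfNorm_apply_le hj (C r) (hC r) y⟩

end Representation

section UltrafilterLimit

variable {ι : Type*}

theorem exists_tendsto_ultrafilter_of_norm_le {E : Type*} [SeminormedAddCommGroup E]
    [ProperSpace E] (U : Ultrafilter ι) {f : ι → E} {C : ℝ} (hf : ∀ i, ‖f i‖ ≤ C) :
    ∃ l, Tendsto f U (𝓝 l) := by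
  obtain ⟨l, -, hl⟩ := (isCompact_closedBall (0 : E) C).ultrafilter_le_nhds (U.map f)
    (tendsto_principal.2 (.of_forall fun i => mem_closedBall_zero_iff.2 (hf i)))
  exact ⟨l, hl⟩

universe u

variable {𝕜 : Type*} [RCLike 𝕜] {F : Type u} [AddCommGroup F] [Module 𝕜 F]

theorem exists_core_tendsto_inner (U : Ultrafilter ι) {H : ι → Type*}
    [∀ i, SeminormedAddCommGroup (H i)] [∀ i, InnerProductSpace 𝕜 (H i)] (B : ∀ i, F →ₗ[𝕜] H i)
    (hB : ∀ x, ∃ C, ∀ i, ‖B i x‖ ≤ C) :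
    ∃ c : PreInnerProductSpace.Core 𝕜 F,
      ∀ x y, Tendsto (fun i => inner 𝕜 (B i x) (B i y)) U (𝓝 (c.inner x y)) := by
  have hlim (x y : F) : ∃ l, Tendsto (fun i => inner 𝕜 (B i x) (B i y)) U (𝓝 l) := by
    obtain ⟨C, hC⟩ := hB x
    obtain ⟨D, hD⟩ := hB y
    exact exists_tendsto_ultrafilter_of_norm_le U fun i => (norm_inner_le_norm _ _).trans
      (mul_le_mul (hC i) (hD i) (norm_nonneg _) ((norm_nonneg _).trans (hC i)))
  choose L hL using hlim
  refine ⟨{ inner := L, conj_inner_symm := ?_, re_inner_nonneg := ?_, add_left := ?_,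
            smul_left := ?_ }, hL⟩
  · intro x y
    refine tendsto_nhds_unique ?_ (hL x y)
    simpa [Function.comp_def] using (RCLike.continuous_conj.tendsto _).comp (hL y x)
  · intro x
    exact ge_of_tendsto' ((RCLike.continuous_re.tendsto _).comp (hL x x)) fun i =>
      inner_self_nonneg
  · intro x y z
    refine tendsto_nhds_unique (hL (x + y) z) ?_
    simpa [inner_add_left] using (hL x z).add (hL y z)
  · intro x y r
    refine tendsto_nhds_unique (hL (r • x) y) ?_
    simpa [inner_smul_left] using (hL x y).const_mul (starRingEnd 𝕜 r)

theorem exists_denseRange_norm_sq_eq (c : PreInnerProductSpace.Core 𝕜 F) :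
    ∃ (K : Type u) (_ : NormedAddCommGroup K) (_ : InnerProductSpace 𝕜 K) (_ : CompleteSpace K)
      (j : F →ₗ[𝕜] K), DenseRange j ∧ ∀ x, ‖j x‖ ^ 2 = RCLike.re (c.inner x x) := by
  let _ : SeminormedAddCommGroup F := InnerProductSpace.Core.toSeminormedAddCommGroup (c := c)
  let _ : InnerProductSpace 𝕜 F := InnerProductSpace.ofCore c
  refine ⟨UniformSpace.Completion F, inferInstance, inferInstance, inferInstance,
    (UniformSpace.Completion.toComplL (𝕜 := 𝕜) (E := F)).toLinearMap,
    UniformSpace.Completion.denseRange_coe, fun x => ?_⟩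
  exact (congrArg (· ^ 2) (UniformSpace.Completion.norm_coe x)).trans
    (Real.sq_sqrt (c.re_inner_nonneg x))

theorem exists_denseRange_tendsto_norm (U : Ultrafilter ι) {H : ι → Type*}
    [∀ i, SeminormedAddCommGroup (H i)] [∀ i, InnerProductSpace 𝕜 (H i)] (B : ∀ i, F →ₗ[𝕜] H i)
    (hB : ∀ x, ∃ C, ∀ i, ‖B i x‖ ≤ C) :
    ∃ (K : Type u) (_ : NormedAddCommGroup K) (_ : InnerProductSpace 𝕜 K) (_ : CompleteSpace K)
      (j : F →ₗ[𝕜] K), DenseRange j ∧ ∀ x, Tendsto (fun i => ‖B i x‖) U (𝓝 ‖j x‖) := by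
  obtain ⟨c, hc⟩ := exists_core_tendsto_inner U B hB
  obtain ⟨K, hK₁, hK₂, hK₃, j, hj, hnorm⟩ := exists_denseRange_norm_sq_eq c
  refine ⟨K, hK₁, hK₂, hK₃, j, hj, fun x => ?_⟩
  have hsq : Tendsto (fun i => ‖B i x‖ ^ 2) U (𝓝 (‖j x‖ ^ 2)) := by
    rw [hnorm]
    simpa [Function.comp_def, inner_self_eq_norm_sq] using
      (RCLike.continuous_re.tendsto _).comp (hc x x)
  simpa using hsq.sqrt

end UltrafilterLimit

section Centralizer

theorem commute_of_hasSum_smul_pow {R A : Type*} [Monoid R] [Semiring A] [DistribMulAction R A]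
    [IsScalarTower R A A] [SMulCommClass R A A] [TopologicalSpace A] [IsTopologicalSemiring A]
    [T2Space A] {a : ℕ → R} {t q : A} (hq : HasSum (fun n => a n • t ^ n) q) : Commute t q :=
  hq.tsum_eq ▸ Commute.tsum_right t fun n => ((Commute.refl t).pow_right n).smul_right (a n)

theorem isUnit_centralizer_iff {R A : Type*} [CommSemiring R] [Semiring A] [Algebra R A]
    {s : Set A} {x : Subalgebra.centralizer R s} : IsUnit x ↔ IsUnit (x : A) := by
  refine ⟨fun hx => hx.map (Subalgebra.centralizer R s).val, ?_⟩
  rintro ⟨u, hu⟩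
  have hinv : (↑u⁻¹ : A) ∈ Subalgebra.centralizer R s := fun g hg =>
    Commute.units_inv_right (hu ▸ x.2 g hg)
  exact ⟨⟨x, ⟨_, hinv⟩, Subtype.ext (by simp [← hu]), Subtype.ext (by simp [← hu])⟩, rfl⟩

theorem spectrum_centralizer {R A : Type*} [CommRing R] [Ring A] [Algebra R A] {s : Set A}
    (x : Subalgebra.centralizer R s) : spectrum R x = spectrum R (x : A) := by
  ext z
  simp [spectrum.mem_iff, isUnit_centralizer_iff]

end Centralizer

section OperatorNorm

theorem exists_norm_le_one_opNorm_le_two_mul {𝕜 X Y : Type*} [DenselyNormedField 𝕜]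
    [NormedAddCommGroup X] [NormedSpace 𝕜 X] [SeminormedAddCommGroup Y] [NormedSpace 𝕜 Y]
    (S : X →L[𝕜] Y) :
    ∃ x, ‖x‖ ≤ 1 ∧ ‖S‖ ≤ 2 * ‖S x‖ := by
  rcases (norm_nonneg S).eq_or_lt' with hS | hS
  · exact ⟨0, by simp, by simp [hS]⟩
  · obtain ⟨x, hx, hSx⟩ := S.exists_lt_apply_of_lt_opNorm (half_lt_self hS)
    exact ⟨x, hx.le, by linarith⟩

theorem norm_apply_pow_apply_le {𝕜 X Y : Type*} [NontriviallyNormedField 𝕜]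
    [SeminormedAddCommGroup X] [NormedSpace 𝕜 X] [SeminormedAddCommGroup Y] [NormedSpace 𝕜 Y]
    {T : X →L[𝕜] X} {M : ℝ} (hT : ∀ n : ℕ, ‖T ^ n‖ ≤ M) {x : X} (hx : ‖x‖ ≤ 1) (s : X →L[𝕜] Y)
    (m : ℕ) : ‖s ((T ^ m) x)‖ ≤ ‖s‖ * M := by
  have horbit : ‖(T ^ m) x‖ ≤ M * 1 := (T ^ m).le_of_opNorm_le_of_le (hT m) hx
  rw [mul_one] at horbit
  exact s.le_opNorm_of_le horbit

end OperatorNorm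

section OrbitAverage

variable {𝕜 X : Type*} [RCLike 𝕜] [NormedAddCommGroup X] [InnerProductSpace 𝕜 X]

/-- The orbit `s x, s (T x), …, s (T ^ (N - 1) x)` as a linear function of `s`, with values in
`ℓ²(Fin N; X)` and scaled so that its squared norm is the Cesàro mean of `‖s (T ^ m x)‖ ^ 2`
(see `norm_sq_orbitMap`). -/
noncomputable def orbitMap (T : X →L[𝕜] X) (x : X) (N : ℕ) :
    (X →L[𝕜] X) →ₗ[𝕜] PiLp 2 fun _ : Fin N => X where
  toFun s := ((√N : ℝ) : 𝕜)⁻¹ • WithLp.toLp 2 fun m : Fin N => s ((T ^ (m : ℕ)) x)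
  map_add' s r := by ext; simp
  map_smul' c s := by ext; simp [smul_comm c]

variable {T : X →L[𝕜] X}

theorem norm_sq_orbitMap (T s : X →L[𝕜] X) (x : X) (N : ℕ) :
    ‖orbitMap T x N s‖ ^ 2 = (N : ℝ)⁻¹ * ∑ m ∈ Finset.range N, ‖s ((T ^ m) x)‖ ^ 2 := by
  rw [← Fin.sum_univ_eq_sum_range fun m => ‖s ((T ^ m) x)‖ ^ 2]
  simp [orbitMap, norm_smul, mul_pow, PiLp.norm_sq_eq_of_L2]

theorem norm_orbitMap_mul_le (r s : X →L[𝕜] X) (x : X) (N : ℕ) :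
    ‖orbitMap T x N (r * s)‖ ≤ ‖r‖ * ‖orbitMap T x N s‖ := by
  refine le_of_sq_le_sq ?_ (by positivity)
  simp only [mul_pow, norm_sq_orbitMap, mul_left_comm (‖r‖ ^ 2), Finset.mul_sum _ _ (‖r‖ ^ 2)]
  gcongr with m
  rw [← mul_pow]
  gcongr
  exact r.le_opNorm _

theorem norm_orbitMap_le {M : ℝ} (hT : ∀ n : ℕ, ‖T ^ n‖ ≤ M) {x : X} (hx : ‖x‖ ≤ 1)
    (N : ℕ) (s : X →L[𝕜] X) : ‖orbitMap T x N s‖ ≤ ‖s‖ * M := by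
  have hM : 0 ≤ M := (norm_nonneg _).trans (hT 0)
  refine le_of_sq_le_sq ?_ (by positivity)
  rw [norm_sq_orbitMap]
  refine inv_mul_le_of_le_mul₀ N.cast_nonneg (by positivity) ?_
  simpa using Finset.sum_le_card_nsmul (Finset.range N) _ ((‖s‖ * M) ^ 2) fun m _ =>
    pow_le_pow_left₀ (norm_nonneg _) (norm_apply_pow_apply_le hT hx s m) 2

theorem norm_sq_orbitMap_mul_sub (s : X →L[𝕜] X) (x : X) (N : ℕ) :
    ‖orbitMap T x N (s * T)‖ ^ 2 - ‖orbitMap T x N s‖ ^ 2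
      = (N : ℝ)⁻¹ * (‖s ((T ^ N) x)‖ ^ 2 - ‖s x‖ ^ 2) := by
  have hshift (m : ℕ) : (s * T) ((T ^ m) x) = s ((T ^ (m + 1)) x) := by simp [pow_succ']
  simp only [norm_sq_orbitMap, hshift, ← mul_sub, ← Finset.sum_sub_distrib]
  rw [Finset.sum_range_sub fun m => ‖s ((T ^ m) x)‖ ^ 2]
  simp

theorem tendsto_norm_sq_orbitMap_mul_sub {M : ℝ} (hT : ∀ n : ℕ, ‖T ^ n‖ ≤ M) {x : ℕ → X}
    (hx : ∀ N, ‖x N‖ ≤ 1) (s : X →L[𝕜] X) :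
    Tendsto (fun N => ‖orbitMap T (x N) N (s * T)‖ ^ 2 - ‖orbitMap T (x N) N s‖ ^ 2)
      atTop (𝓝 0) := by
  have hbound : Tendsto (fun N : ℕ => (N : ℝ)⁻¹ * (‖s‖ * M) ^ 2) atTop (𝓝 0) := by
    simpa using (tendsto_inv_atTop_nhds_zero_nat (𝕜 := ℝ)).mul_const ((‖s‖ * M) ^ 2)
  refine squeeze_zero_norm (fun N => ?_) hbound
  rw [norm_sq_orbitMap_mul_sub, norm_mul, norm_inv, Real.norm_natCast]
  gcongr
  have horbit (m : ℕ) : ‖s ((T ^ m) (x N))‖ ^ 2 ≤ (‖s‖ * M) ^ 2 :=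
    pow_le_pow_left₀ (norm_nonneg _) (norm_apply_pow_apply_le hT (hx N) s m) 2
  exact abs_sub_le_of_nonneg_of_le (by positivity) (horbit N) (by positivity)
    (by simpa using horbit 0)

theorem norm_pow_mul_apply_le {M : ℝ} (hT : ∀ n : ℕ, ‖T ^ n‖ ≤ M) {Q : X →L[𝕜] X}
    (hQ : Commute T Q) (x : X) {N : ℕ} (hN : 0 < N) :
    ‖(T ^ N * Q) x‖ ≤ M * ‖orbitMap T x N Q‖ := by
  have hM : 0 ≤ M := (norm_nonneg _).trans (hT 0)
  have hterm (m : ℕ) (hm : m ∈ Finset.range N) :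
      ‖(T ^ N * Q) x‖ ^ 2 ≤ M ^ 2 * ‖Q ((T ^ m) x)‖ ^ 2 := by
    have hsplit : T ^ N * Q = T ^ (N - m) * (Q * T ^ m) := by
      rw [← (hQ.pow_left m).eq, ← mul_assoc, ← pow_add,
        Nat.sub_add_cancel (Finset.mem_range.1 hm).le]
    rw [← mul_pow, hsplit]
    gcongr
    exact (T ^ (N - m)).le_of_opNorm_le (hT _) _
  refine le_of_sq_le_sq ?_ (by positivity)
  rw [mul_pow, norm_sq_orbitMap, mul_left_comm, le_inv_mul_iff₀ (by positivity), Finset.mul_sum]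
  simpa using Finset.card_nsmul_le_sum _ _ _ hterm

end OrbitAverage

section Convergence

universe u

variable {X : Type u} [NormedAddCommGroup X] [InnerProductSpace ℂ X] {T Q : X →L[ℂ] X} {a : ℕ → ℂ}

/- The Cesàro means of `‖s (T ^ m x)‖ ^ 2` and of `‖s (T ^ (m + 1) x)‖ ^ 2` differ only by
boundary terms of order `1 / N`, which is why `T` becomes an isometry in the limit. -/
theorem exists_algHom_isometry_tendsto_norm_orbitMap {M : ℝ}
    (hT : ∀ n : ℕ, ‖T ^ n‖ ≤ M) {U : Ultrafilter ℕ} (hU : ↑U ≤ (atTop : Filter ℕ)) {x : ℕ → X}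
    (hx : ∀ N, ‖x N‖ ≤ 1) :
    ∃ (K : Type u) (_ : NormedAddCommGroup K) (_ : InnerProductSpace ℂ K) (_ : CompleteSpace K)
      (ψ : Subalgebra.centralizer ℂ {T} →ₐ[ℂ] (K →L[ℂ] K)) (ξ : K), Continuous ψ ∧
      (∀ t : Subalgebra.centralizer ℂ {T}, ↑t = T → ∀ y, ‖ψ t y‖ = ‖y‖) ∧
      ∀ s : Subalgebra.centralizer ℂ {T},
        Tendsto (fun N => ‖orbitMap T (x N) N s‖) U (𝓝 ‖ψ s ξ‖) := by
  let A := Subalgebra.centralizer ℂ {T}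
  obtain ⟨K, hK₁, hK₂, hK₃, j, hj, hlim⟩ := exists_denseRange_tendsto_norm U
    (fun N => orbitMap T (x N) N ∘ₗ A.val.toLinearMap)
    fun s => ⟨‖(s : X →L[ℂ] X)‖ * M, fun N => norm_orbitMap_le hT (hx N) N s⟩
  obtain ⟨ψ, hψj, hψ_le⟩ := exists_algHom_of_denseRange hj (Algebra.lmul ℂ A) (C := (‖·‖))
    fun r s => le_of_tendsto_of_tendsto' (hlim (r * s)) ((hlim s).const_mul ‖r‖)
      fun N => norm_orbitMap_mul_le _ _ _ _
  have hψ : Continuous ψ := AddMonoidHomClass.continuous_of_bound ψ 1 fun r => by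
    rw [one_mul]
    exact (ψ r).opNorm_le_bound (norm_nonneg r) (hψ_le r)
  refine ⟨K, hK₁, hK₂, hK₃, ψ, j 1, hψ, fun t ht y => ?_,
    fun s => by simpa [hψj] using hlim s⟩
  refine hj.induction_on (p := fun y => ‖ψ t y‖ = ‖y‖) y
    (isClosed_eq (by fun_prop) (by fun_prop)) fun s => ?_
  have hcomm : ((t * s : A) : X →L[ℂ] X) = s * T := by
    simpa [ht] using s.2 T rfl
  have hdiff : ‖j (t * s)‖ ^ 2 - ‖j s‖ ^ 2 = 0 := by
    refine tendsto_nhds_unique (((hlim (t * s)).pow 2).sub ((hlim s).pow 2)) ?_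
    simpa [← hcomm] using (tendsto_norm_sq_orbitMap_mul_sub hT hx (s : X →L[ℂ] X)).mono_left hU
  rw [hψj]
  exact (sq_eq_sq₀ (norm_nonneg _) (norm_nonneg _)).1 (sub_eq_zero.1 hdiff)

theorem tendsto_orbitMap_zero {M : ℝ} (hT : ∀ n : ℕ, ‖T ^ n‖ ≤ M) {z₀ : ℂ} (hz₀ : ‖z₀‖ = 1)
    (hz₀T : z₀ ∉ spectrum ℂ T) (ha : Summable fun n => ‖a n‖)
    (h : ∀ z ∈ spectrum ℂ T, ‖z‖ = 1 → ∑' n, a n * z ^ n = 0)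
    (hQ : HasSum (fun n => a n • T ^ n) Q) {U : Ultrafilter ℕ}
    (hU : ↑U ≤ (atTop : Filter ℕ)) {x : ℕ → X} (hx : ∀ N, ‖x N‖ ≤ 1) :
    Tendsto (fun N => ‖orbitMap T (x N) N Q‖) U (𝓝 0) := by
  have hcomm : Commute T Q := commute_of_hasSum_smul_pow hQ
  let t : Subalgebra.centralizer ℂ {T} := ⟨T, by simp [Subalgebra.mem_centralizer_iff]⟩
  let q : Subalgebra.centralizer ℂ {T} :=
    ⟨Q, by simpa [Subalgebra.mem_centralizer_iff] using hcomm.eq⟩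
  have hq : HasSum (fun n => a n • t ^ n) q :=
    (Topology.IsInducing.subtypeVal.hasSum_iff (g := (Subalgebra.centralizer ℂ {T}).val) _ _).1 hQ
  have hspec : spectrum ℂ t = spectrum ℂ T := spectrum_centralizer t
  obtain ⟨K, _, _, _, ψ, ξ, hψ, hiso, hlim⟩ := exists_algHom_isometry_tendsto_norm_orbitMap hT hU hx
  have hzero : ψ q = 0 := map_eq_zero_of_isometry ψ hψ
    ((ψ t).norm_map_iff_adjoint_comp_self.1 (hiso t rfl)) hz₀ (hspec ▸ hz₀T) ha
    (hspec ▸ h) hq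
  simpa [hzero] using hlim q

theorem tendsto_norm_pow_mul_zero {M : ℝ} (hT : ∀ n : ℕ, ‖T ^ n‖ ≤ M)
    (ha : Summable fun n => ‖a n‖)
    (h : ∀ z ∈ spectrum ℂ T, ‖z‖ = 1 → ∑' n, a n * z ^ n = 0)
    (hQ : HasSum (fun n => a n • T ^ n) Q) :
    Tendsto (fun n => ‖T ^ n * Q‖) atTop (𝓝 0) := by
  by_cases hcircle : ∀ z : ℂ, ‖z‖ = 1 → z ∈ spectrum ℂ T
  · obtain rfl := eq_zero_of_tsum_mul_pow_eq_zero ha fun z hz => h z (hcircle z hz) hz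
    obtain rfl : Q = 0 := hQ.unique (by simp)
    simp
  push Not at hcircle
  obtain ⟨z₀, hz₀, hz₀T⟩ := hcircle
  have hcomm : Commute T Q := commute_of_hasSum_smul_pow hQ
  choose x hx hx_norm using fun N => exists_norm_le_one_opNorm_le_two_mul (T ^ N * Q)
  refine (tendsto_iff_ultrafilter _ _ _).2 fun U hU => ?_
  have horbit := tendsto_orbitMap_zero hT hz₀ hz₀T ha h hQ hU hx
  refine squeeze_zero' (.of_forall fun N => norm_nonneg _) ?_
    (by simpa using horbit.const_mul (2 * M))
  filter_upwards [hU (eventually_gt_atTop 0)] with N hN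
  calc ‖T ^ N * Q‖ ≤ 2 * ‖(T ^ N * Q) (x N)‖ := hx_norm N
    _ ≤ 2 * (M * ‖orbitMap T (x N) N Q‖) := by gcongr; exact norm_pow_mul_apply_le hT hcomm _ hN
    _ = 2 * M * ‖orbitMap T (x N) N Q‖ := by ring

end Convergence

end KatznelsonTzafriri

/-- ℤ₊-instance of Proposition 3.7: if `T` is power-bounded on a complex Hilbert space,
`a ∈ ℓ¹(ℕ)`, and for every `λ ∈ σ(T) ∩ 𝕋` the Cesàro averages
`(1/N)·‖∑_{n<N} conj(λ)ⁿ Tⁿ â(T)‖` tend to `0`, then `‖Tⁿ â(T)‖ → 0`. -/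
theorem stmt_5 {X : Type*} [NormedAddCommGroup X] [InnerProductSpace ℂ X] [CompleteSpace X]
    (T : X →L[ℂ] X) (hT : ∃ M : ℝ, ∀ n : ℕ, ‖T ^ n‖ ≤ M)
    (a : ℕ → ℂ) (ha : Summable fun n : ℕ => ‖a n‖)
    (h : ∀ lam ∈ spectrum ℂ T, ‖lam‖ = 1 →
      Tendsto (fun N : ℕ =>
          (1 / (N : ℝ)) * ‖∑ n ∈ Finset.range N, (starRingEnd ℂ lam) ^ n •
            (T ^ n * (∑' m : ℕ, a m • T ^ m))‖)
        atTop (nhds 0)) :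
    Tendsto (fun n : ℕ => ‖T ^ n * (∑' m : ℕ, a m • T ^ m)‖) atTop (nhds 0) := by
  obtain ⟨M, hM⟩ := hT
  have hsum : Summable fun n => a n • T ^ n := by
    refine (ha.mul_right M).of_norm_bounded fun n => ?_
    rw [norm_smul]
    gcongr
    exact hM n
  have hsymbol (z : ℂ) (hz : z ∈ spectrum ℂ T) (hz_norm : ‖z‖ = 1) : ∑' n, a n * z ^ n = 0 :=
    have hsum_z : Summable fun n => a n * z ^ n := .of_norm (by simpa [hz_norm] using ha)
    KatznelsonTzafriri.eq_zero_of_tendsto_cesaro hz hz_norm hsum_z.hasSum hsum.hasSum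
      (h z hz hz_norm)
  exact KatznelsonTzafriri.tendsto_norm_pow_mul_zero hM ha hsymbol hsum.hasSum
end

section
/- Let X be a complex Banach space, let T ∈ B(X) be power-bounded, and let a ∈ ℓ¹(ℕ). Then for every λ ∈ σ(T) ∩ 𝕋 and every n ∈ ℕ, |â(λ)| ≤ ‖Tⁿ â(T)‖. (ℤ₊-instance of Lemma 3.8 of the paper.) -/
open Filter Topology

/-!
If `lam ∈ σ(x)` then `p(lam) ∈ σ(p(x))` for every polynomial `p`, so `|p(lam)| ≤ ‖p(x)‖`. This
inequality carries convergence of series of polynomials from `x` to `lam` by the Cauchy criterion,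
and it passes to their sums. For the polynomials `X ^ n * (a m * X ^ m)` it bounds
`|lam|ⁿ |â(lam)|` by `‖xⁿ â(x)‖`.
-/

section SpectralBounds

open Polynomial

variable {𝕜 A : Type*} [NormedField 𝕜] [NormedRing A] [NormedAlgebra 𝕜 A]
  [HasSummableGeomSeries A] {x : A} {lam : 𝕜}

-- Unlike `spectrum.norm_le_norm_of_mem`, this covers the operators on the zero space (`‖1‖ = 0`).
theorem norm_le_norm_of_mem_spectrum (hlam : lam ∈ spectrum 𝕜 x) : ‖lam‖ ≤ ‖x‖ := by
  by_contra! h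
  have lam_ne_zero : lam ≠ 0 := norm_pos_iff.mp ((norm_nonneg x).trans_lt h)
  have norm_lt_one : ‖lam⁻¹ • x‖ < 1 := by
    rwa [norm_smul, norm_inv, inv_mul_lt_one₀ (norm_pos_iff.mpr lam_ne_zero)]
  have factorization : algebraMap 𝕜 A lam - x = algebraMap 𝕜 A lam * (1 - lam⁻¹ • x) := by
    rw [← Algebra.smul_def, smul_sub, smul_inv_smul₀ lam_ne_zero, Algebra.algebraMap_eq_smul_one]
  refine hlam ?_
  rw [spectrum.mem_resolventSet_iff, factorization]
  exact (lam_ne_zero.isUnit.map _).mul (isUnit_one_sub_of_norm_lt_one norm_lt_one)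

theorem norm_eval_le_norm_aeval (hlam : lam ∈ spectrum 𝕜 x) (p : 𝕜[X]) :
    ‖p.eval lam‖ ≤ ‖aeval x p‖ :=
  norm_le_norm_of_mem_spectrum (spectrum.subset_polynomial_aeval x p ⟨lam, hlam, rfl⟩)

theorem norm_sum_eval_le_norm_sum_aeval {ι : Type*} (hlam : lam ∈ spectrum 𝕜 x)
    (p : ι → 𝕜[X]) (s : Finset ι) :
    ‖∑ i ∈ s, (p i).eval lam‖ ≤ ‖∑ i ∈ s, aeval x (p i)‖ := by
  simpa only [eval_finsetSum, map_sum] using norm_eval_le_norm_aeval hlam (∑ i ∈ s, p i)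

variable [CompleteSpace 𝕜]

theorem summable_eval_of_mem_spectrum {ι : Type*} {p : ι → 𝕜[X]}
    (hp : Summable fun i => aeval x (p i)) (hlam : lam ∈ spectrum 𝕜 x) :
    Summable fun i => (p i).eval lam := by
  refine summable_iff_vanishing_norm.mpr fun ε hε => ?_
  obtain ⟨s, hs⟩ := hp.vanishing (Metric.ball_mem_nhds 0 hε)
  exact ⟨s, fun t hts => (norm_sum_eval_le_norm_sum_aeval hlam p t).trans_lt
    (mem_ball_zero_iff.mp (hs t hts))⟩

theorem norm_tsum_eval_le_norm_tsum_aeval {ι : Type*} {p : ι → 𝕜[X]}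
    (hp : Summable fun i => aeval x (p i)) (hlam : lam ∈ spectrum 𝕜 x) :
    ‖∑' i, (p i).eval lam‖ ≤ ‖∑' i, aeval x (p i)‖ :=
  le_of_tendsto_of_tendsto' (summable_eval_of_mem_spectrum hp hlam).hasSum.norm hp.hasSum.norm
    (norm_sum_eval_le_norm_sum_aeval hlam p)

theorem stmt_6_general {a : ℕ → 𝕜} (ha : Summable fun m => a m • x ^ m)
    (hlam : lam ∈ spectrum 𝕜 x) (n : ℕ) :
    ‖lam‖ ^ n * ‖∑' m, a m * lam ^ m‖ ≤ ‖x ^ n * ∑' m, a m • x ^ m‖ := by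
  let p (m : ℕ) : 𝕜[X] := X ^ n * (C (a m) * X ^ m)
  have eval_p (m : ℕ) : (p m).eval lam = lam ^ n * (a m * lam ^ m) := by simp [p]
  have aeval_p (m : ℕ) : aeval x (p m) = x ^ n * (a m • x ^ m) := by simp [p, Algebra.smul_def]
  have summable_p : Summable fun m => aeval x (p m) := by
    simpa only [aeval_p] using ha.mul_left (x ^ n)
  calc ‖lam‖ ^ n * ‖∑' m, a m * lam ^ m‖
      = ‖∑' m, (p m).eval lam‖ := by simp only [eval_p, tsum_mul_left, norm_mul, norm_pow]
    _ ≤ ‖∑' m, aeval x (p m)‖ := norm_tsum_eval_le_norm_tsum_aeval summable_p hlam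
    _ = ‖x ^ n * ∑' m, a m • x ^ m‖ := by simp only [aeval_p, ha.tsum_mul_left]

end SpectralBounds

theorem summable_smul_pow_of_powerBounded {𝕜 A : Type*} [NormedField 𝕜] [NormedRing A]
    [NormedAlgebra 𝕜 A] [CompleteSpace A] {x : A} (hx : ∃ M : ℝ, ∀ n : ℕ, ‖x ^ n‖ ≤ M)
    {a : ℕ → 𝕜} (ha : Summable fun n => ‖a n‖) : Summable fun n => a n • x ^ n := by
  obtain ⟨M, hM⟩ := hx
  refine (ha.mul_right M).of_norm_bounded fun n => (norm_smul_le _ _).trans ?_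
  gcongr
  exact hM n

/-- ℤ₊-instance of Lemma 3.8: if `T` is power-bounded on a complex Banach space and
`a ∈ ℓ¹(ℕ)`, then `|â(λ)| ≤ ‖Tⁿ â(T)‖` for every `λ ∈ σ(T) ∩ 𝕋` and every `n`. -/
theorem stmt_6 {X : Type*} [NormedAddCommGroup X] [NormedSpace ℂ X] [CompleteSpace X]
    (T : X →L[ℂ] X) (hT : ∃ M : ℝ, ∀ n : ℕ, ‖T ^ n‖ ≤ M)
    (a : ℕ → ℂ) (ha : Summable fun n : ℕ => ‖a n‖) :
    ∀ lam ∈ spectrum ℂ T, ‖lam‖ = 1 →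
      ∀ n : ℕ, ‖∑' m : ℕ, a m * lam ^ m‖ ≤ ‖T ^ n * (∑' m : ℕ, a m • T ^ m)‖ := by
  intro lam hlam norm_lam n
  simpa only [norm_lam, one_pow, one_mul] using
    stmt_6_general (summable_smul_pow_of_powerBounded hT ha) hlam n
end

section
/- Let X be a complex Hilbert space, let T ∈ B(X) be power-bounded, and let a ∈ ℓ¹(ℕ). Then the following three statements are equivalent: (i) â(λ) = 0 for every λ ∈ σ(T) ∩ 𝕋; (ii) for every λ ∈ σ(T) ∩ 𝕋, (1/N)·‖∑_{n=0}^{N-1} conj(λ)ⁿ Tⁿ â(T)‖ → 0 as N → ∞ (operator norm); (iii) ‖Tⁿ â(T)‖ → 0 as n → ∞. (ℤ₊-instance, with Følner sets the intervals {0,…,N−1}, of Theorem 3.1 of the paper.) -/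
open Filter Topology

/-! Let `J_λ` be the closed ideal generated by `T - λ` in the commutant of `T`. For `λ ∈ σ(T)` it is
proper, and `â(T) - â(λ)` is a limit of polynomials in `T` vanishing at `λ`, so `â(λ) = 0` exactly
when `â(T) ∈ J_λ`. Cesàro means tending to `0` also force `Q ∈ J_λ`, since
`Q - N⁻¹ ∑_{n < N} λ⁻ⁿ Tⁿ Q` is a multiple of `T - λ`.

It remains to show that `Tⁿ Q → 0` when `Q` commutes with `T` and lies in `J_λ` for every `λ ∈ 𝕋`.
For `w ^ N = 1` put `S_w = ∑_{n < N} w⁻ⁿ Tⁿ`. Telescoping bounds `(T - w) S_w` independently of `N`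
and `w`, so writing `Q ≈ (T - λ) G` near each `λ` and using compactness of `𝕋` gives
`‖Q S_w x‖ ≤ D ‖x‖ + ε ‖S_w x‖` uniformly. Squaring and summing over the `N`-th roots of unity,
Parseval's identity in the Hilbert space turns this into a bound `∑_{n < N} ‖Tⁿ Q x‖² = o(N)`,
uniform over the unit ball, while power-boundedness bounds `N ‖T^N Q x‖²` by a multiple of that
sum. -/

theorem summable_smul_of_norm_le {𝕜 E : Type*} [NormedField 𝕜] [NormedAddCommGroup E]
    [NormedSpace 𝕜 E] [CompleteSpace E] {a : ℕ → 𝕜} {v : ℕ → E} {M : ℝ}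
    (ha : Summable fun n => ‖a n‖) (hv : ∀ n, ‖v n‖ ≤ M) : Summable fun n => a n • v n := by
  refine Summable.of_norm_bounded (ha.mul_right M) fun n => ?_
  rw [norm_smul]
  gcongr
  exact hv n

section Commutant

variable {𝕜 A : Type*} [NormedField 𝕜] [NormedRing A] [NormedAlgebra 𝕜 A] {T Q : A} {c : 𝕜}

/-- The closed ideal generated by `T - c` in the commutant of `T`, viewed as a subspace of the whole
algebra. Membership of `Q` replaces the vanishing at `c` of a function `f` with `Q = f(T)`. -/
def commutantIdeal (T : A) (c : 𝕜) : Submodule 𝕜 A :=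
  ((Subalgebra.centralizer 𝕜 {T}).toSubmodule.map
    (LinearMap.mulLeft 𝕜 (T - algebraMap 𝕜 A c))).topologicalClosure

theorem isClosed_commutantIdeal (T : A) (c : 𝕜) : IsClosed (commutantIdeal T c : Set A) :=
  Submodule.isClosed_topologicalClosure _

theorem sub_algebraMap_mul_mem_commutantIdeal (hQ : Commute T Q) :
    (T - algebraMap 𝕜 A c) * Q ∈ commutantIdeal T c :=
  Submodule.le_topologicalClosure _ ⟨Q, by rintro _ rfl; exact hQ, rfl⟩

theorem exists_norm_sub_lt_of_mem_commutantIdeal (hQ : Q ∈ commutantIdeal T c) {ε : ℝ}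
    (hε : 0 < ε) : ∃ G, Commute T G ∧ ‖Q - (T - algebraMap 𝕜 A c) * G‖ < ε := by
  obtain ⟨_, ⟨G, hG, rfl⟩, hlt⟩ := Metric.mem_closure_iff.1 hQ ε hε
  exact ⟨G, hG T rfl, by simpa [dist_eq_norm] using hlt⟩

theorem pow_sub_algebraMap_mul_mem_commutantIdeal (hQ : Commute T Q) (n : ℕ) :
    (T ^ n - algebraMap 𝕜 A (c ^ n)) * Q ∈ commutantIdeal T c := by
  have hc : Commute T (algebraMap 𝕜 A c) := Algebra.commute_algebraMap_right c T
  rw [map_pow, ← hc.mul_geom_sum₂, mul_assoc]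
  refine sub_algebraMap_mul_mem_commutantIdeal (Commute.mul_right ?_ hQ)
  exact Commute.sum_right _ _ _ fun i _ => (Commute.self_pow T i).mul_right (hc.pow_right _)

theorem mem_commutantIdeal_of_notMem_spectrum (hQ : Commute T Q) (hc : c ∉ spectrum 𝕜 T) :
    Q ∈ commutantIdeal T c := by
  obtain ⟨u, hu⟩ : IsUnit (T - algebraMap 𝕜 A c) := by
    rwa [spectrum.mem_iff, not_not, ← IsUnit.neg_iff, neg_sub] at hc
  have hT : Commute T ↑u⁻¹ := Commute.units_inv_right <| by
    rw [hu]
    exact (Commute.refl T).sub_right (Algebra.commute_algebraMap_right c T)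
  rw [← u.mul_inv_cancel_left Q, hu]
  exact sub_algebraMap_mul_mem_commutantIdeal (hT.mul_right hQ)

theorem one_notMem_commutantIdeal [HasSummableGeomSeries A] (hc : c ∈ spectrum 𝕜 T) :
    1 ∉ commutantIdeal T c := by
  intro h
  obtain ⟨G, hG, hlt⟩ := exists_norm_sub_lt_of_mem_commutantIdeal h one_pos
  have hunit : IsUnit ((T - algebraMap 𝕜 A c) * G) := by
    simpa using isUnit_one_sub_of_norm_lt_one hlt
  have hcomm : Commute (T - algebraMap 𝕜 A c) G :=
    hG.sub_left (Algebra.commute_algebraMap_left c G)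
  refine spectrum.mem_iff.1 hc ?_
  rw [← IsUnit.neg_iff, neg_sub]
  exact (hcomm.isUnit_mul_iff.1 hunit).1

theorem tsum_sub_algebraMap_mem_commutantIdeal {a : ℕ → 𝕜} (hT : Summable fun m => a m • T ^ m)
    (hc : Summable fun m => a m * c ^ m) :
    ∑' m, a m • T ^ m - algebraMap 𝕜 A (∑' m, a m * c ^ m) ∈ commutantIdeal T c := by
  have hsum := hT.hasSum.sub (hc.hasSum.map (algebraMap 𝕜 A) (continuous_algebraMap 𝕜 A))
  refine (isClosed_commutantIdeal T c).mem_of_tendsto hsum (.of_forall fun s => ?_)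
  refine Submodule.sum_mem _ fun m _ => ?_
  have := Submodule.smul_mem _ (a m)
    (pow_sub_algebraMap_mul_mem_commutantIdeal (c := c) (Commute.one_right T) m)
  simpa [mul_sub, Algebra.smul_def] using this

theorem tsum_mem_commutantIdeal_iff [HasSummableGeomSeries A] {a : ℕ → 𝕜}
    (hT : Summable fun m => a m • T ^ m) (ha : Summable fun m => a m * c ^ m)
    (hc : c ∈ spectrum 𝕜 T) :
    ∑' m, a m • T ^ m ∈ commutantIdeal T c ↔ ∑' m, a m * c ^ m = 0 := by
  have hdiff := tsum_sub_algebraMap_mem_commutantIdeal hT ha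
  refine ⟨fun hmem => ?_, fun hzero => by simpa [hzero] using hdiff⟩
  by_contra hne
  have hone := Submodule.sub_mem _ hmem hdiff
  rw [sub_sub_cancel, Algebra.algebraMap_eq_smul_one, Submodule.smul_mem_iff _ hne] at hone
  exact one_notMem_commutantIdeal hc hone

end Commutant

section TwistedSum

variable {𝕜 A : Type*} [NormedField 𝕜] [NormedRing A] [NormedAlgebra 𝕜 A] {T Q : A} {w : 𝕜} {M : ℝ}

/-- The Fourier-type sum `∑ n < N, w⁻ⁿ Tⁿ` of the powers of `T`. On the unit circle `w⁻¹` is the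
conjugate of `w`, so this is `N` times the Cesàro mean of `conj w ^ n • T ^ n`. -/
def twistedSum (T : A) (w : 𝕜) (N : ℕ) : A :=
  ∑ n ∈ Finset.range N, w⁻¹ ^ n • T ^ n

theorem twistedSum_mul (T Q : A) (w : 𝕜) (N : ℕ) :
    twistedSum T w N * Q = ∑ n ∈ Finset.range N, w⁻¹ ^ n • (T ^ n * Q) := by
  simp only [twistedSum, Finset.sum_mul, smul_mul_assoc]

theorem sub_algebraMap_mul_twistedSum {N : ℕ} (hw : w ≠ 0) (hwN : w ^ N = 1) :
    (T - algebraMap 𝕜 A w) * twistedSum T w N = w • (T ^ N - 1) := by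
  have hfactor : T - algebraMap 𝕜 A w = w • (w⁻¹ • T - 1) := by
    rw [smul_sub, smul_inv_smul₀ hw, Algebra.algebraMap_eq_smul_one]
  simp only [hfactor, twistedSum, ← smul_pow, smul_mul_assoc, mul_geom_sum]
  rw [smul_pow, inv_pow, hwN, inv_one, one_smul]

theorem norm_sub_algebraMap_mul_twistedSum_le (hM : ∀ n, ‖T ^ n‖ ≤ M) {N : ℕ} (hw : ‖w‖ = 1)
    (hwN : w ^ N = 1) : ‖(T - algebraMap 𝕜 A w) * twistedSum T w N‖ ≤ 2 * M := by
  have hw0 : w ≠ 0 := norm_ne_zero_iff.1 (by simp [hw])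
  rw [sub_algebraMap_mul_twistedSum hw0 hwN, norm_smul, hw, one_mul, ← pow_zero T, two_mul]
  exact (norm_sub_le _ _).trans (add_le_add (hM N) (hM 0))

theorem tendsto_mean_norm_twistedSum_mul (hw : ‖w‖ = 1)
    (h : Tendsto (fun n => ‖T ^ n * Q‖) atTop (𝓝 0)) :
    Tendsto (fun N : ℕ => 1 / (N : ℝ) * ‖twistedSum T w N * Q‖) atTop (𝓝 0) := by
  refine squeeze_zero (fun N => by positivity) (fun N => ?_) h.cesaro
  rw [one_div, twistedSum_mul]
  gcongr
  refine (norm_sum_le _ _).trans_eq (Finset.sum_congr rfl fun n _ => ?_)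
  simp [norm_smul, hw]

end TwistedSum

theorem mem_commutantIdeal_of_tendsto_mean {𝕜 A : Type*} [RCLike 𝕜] [NormedRing A]
    [NormedAlgebra 𝕜 A] {T Q : A} {w : 𝕜} (hQ : Commute T Q) (hw : w ≠ 0)
    (h : Tendsto (fun N : ℕ => 1 / (N : ℝ) * ‖twistedSum T w N * Q‖) atTop (𝓝 0)) :
    Q ∈ commutantIdeal T w := by
  have hmean : Tendsto (fun N : ℕ => (N : 𝕜)⁻¹ • (twistedSum T w N * Q)) atTop (𝓝 0) := by
    rw [tendsto_zero_iff_norm_tendsto_zero]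
    simpa [norm_smul] using h
  have hlim : Tendsto (fun N : ℕ => Q - (N : 𝕜)⁻¹ • (twistedSum T w N * Q)) atTop (𝓝 Q) := by
    simpa using hmean.const_sub Q
  refine (isClosed_commutantIdeal T w).mem_of_tendsto hlim ?_
  filter_upwards [eventually_ne_atTop 0] with N hN
  have hterm (n : ℕ) : Q - w⁻¹ ^ n • (T ^ n * Q) ∈ commutantIdeal T w := by
    have := Submodule.smul_mem _ (-(w⁻¹ ^ n))
      (pow_sub_algebraMap_mul_mem_commutantIdeal (c := w) hQ n)
    rwa [sub_mul, smul_sub, ← Algebra.smul_def, smul_smul, neg_mul, ← mul_pow,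
      inv_mul_cancel₀ hw, one_pow, neg_smul, neg_smul, one_smul, neg_sub_neg] at this
  have hsum := Submodule.smul_mem _ (N : 𝕜)⁻¹
    (Submodule.sum_mem _ fun n (_ : n ∈ Finset.range N) => hterm n)
  rwa [Finset.sum_sub_distrib, ← twistedSum_mul, Finset.sum_const, Finset.card_range, smul_sub,
    ← Nat.cast_smul_eq_nsmul 𝕜, inv_smul_smul₀ (Nat.cast_ne_zero.2 hN)] at hsum

section Parseval

theorem sum_range_pow_div_pow_pow {K : Type*} [Field K] {ω : K} {N n m : ℕ}
    (hω : IsPrimitiveRoot ω N) (hn : n < N) (hm : m < N) :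
    ∑ k ∈ Finset.range N, (ω ^ n / ω ^ m) ^ k = if n = m then (N : K) else 0 := by
  have hω0 : ω ≠ 0 := hω.ne_zero (by omega)
  split_ifs with h
  · simp [h, hω0]
  · have hne : ω ^ n / ω ^ m ≠ 1 := fun h1 =>
      h (hω.pow_inj hn hm ((div_eq_one_iff_eq (pow_ne_zero m hω0)).1 h1))
    have hpow : (ω ^ n / ω ^ m) ^ N = 1 := by
      rw [div_pow, pow_right_comm, pow_right_comm ω m, hω.pow_eq_one, one_pow, one_pow, div_one]
    rw [geom_sum_eq hne, hpow, sub_self, zero_div]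

variable {𝕜 X : Type*} [RCLike 𝕜] [NormedAddCommGroup X] [InnerProductSpace 𝕜 X]

theorem norm_sq_sum_smul_eq_sum_inner {ω : 𝕜} (hω : ‖ω‖ = 1) (N k : ℕ) (y : ℕ → X) :
    (‖∑ n ∈ Finset.range N, (ω ^ k)⁻¹ ^ n • y n‖ : 𝕜) ^ 2 =
      ∑ n ∈ Finset.range N, ∑ m ∈ Finset.range N, (ω ^ n / ω ^ m) ^ k * inner 𝕜 (y n) (y m) := by
  rw [← inner_self_eq_norm_sq_to_K (𝕜 := 𝕜), sum_inner]
  simp only [inner_sum, inner_smul_left, inner_smul_right]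
  refine Finset.sum_congr rfl fun n _ => Finset.sum_congr rfl fun m _ => ?_
  rw [← RCLike.inv_eq_conj (by simp [hω]), ← mul_assoc]
  congr 1
  rw [inv_pow, inv_pow, inv_inv, inv_mul_eq_div, div_pow, pow_right_comm, pow_right_comm ω k m]

theorem parseval_of_isPrimitiveRoot {ω : 𝕜} {N : ℕ} (hω : IsPrimitiveRoot ω N) (y : ℕ → X) :
    ∑ k ∈ Finset.range N, ‖∑ n ∈ Finset.range N, (ω ^ k)⁻¹ ^ n • y n‖ ^ 2 =
      N * ∑ n ∈ Finset.range N, ‖y n‖ ^ 2 := by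
  rcases eq_or_ne N 0 with rfl | hN
  · simp
  have hω1 : ‖ω‖ = 1 := (hω.isOfFinOrder hN).norm_eq_one
  apply RCLike.ofReal_injective (K := 𝕜)
  push_cast
  calc
    _ = ∑ n ∈ Finset.range N, ∑ m ∈ Finset.range N,
          (∑ k ∈ Finset.range N, (ω ^ n / ω ^ m) ^ k) * inner 𝕜 (y n) (y m) := by
      simp only [norm_sq_sum_smul_eq_sum_inner hω1, Finset.sum_mul]
      rw [Finset.sum_comm]
      exact Finset.sum_congr rfl fun n _ => Finset.sum_comm
    _ = ∑ n ∈ Finset.range N, ∑ m ∈ Finset.range N,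
          if n = m then (N : 𝕜) * inner 𝕜 (y n) (y m) else 0 := by
      refine Finset.sum_congr rfl fun n hn => Finset.sum_congr rfl fun m hm => ?_
      rw [sum_range_pow_div_pow_pow hω (Finset.mem_range.1 hn) (Finset.mem_range.1 hm), ite_mul,
        zero_mul]
    _ = N * ∑ n ∈ Finset.range N, (‖y n‖ : 𝕜) ^ 2 := by
      rw [Finset.mul_sum]
      refine Finset.sum_congr rfl fun n hn => ?_
      rw [Finset.sum_ite_eq, if_pos hn, inner_self_eq_norm_sq_to_K]

end Parseval

section Estimate

variable {𝕜 X : Type*} [NontriviallyNormedField 𝕜] [NormedAddCommGroup X] [NormedSpace 𝕜 X]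
  {T Q : X →L[𝕜] X} {c : 𝕜} {M ε : ℝ}

theorem eventually_norm_apply_twistedSum_le (hM : ∀ n, ‖T ^ n‖ ≤ M)
    (hQ : Q ∈ commutantIdeal T c) (hε : 0 < ε) :
    ∃ D : ℝ, ∀ᶠ w in 𝓝 c, ∀ N : ℕ, ‖w‖ = 1 → w ^ N = 1 → ∀ x,
      ‖Q (twistedSum T w N x)‖ ≤ D * ‖x‖ + ε * ‖twistedSum T w N x‖ := by
  obtain ⟨G, hG, hlt⟩ := exists_norm_sub_lt_of_mem_commutantIdeal hQ (half_pos hε)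
  set R := Q - (T - algebraMap 𝕜 _ c) * G with hR
  have hnear : ∀ᶠ w in 𝓝 c, ‖w - c‖ * ‖G‖ < ε / 2 := by
    have : Tendsto (fun w => ‖w - c‖ * ‖G‖) (𝓝 c) (𝓝 (‖c - c‖ * ‖G‖)) :=
      Continuous.tendsto (by fun_prop) c
    exact this.eventually_lt_const (by simpa using half_pos hε)
  refine ⟨‖G‖ * (2 * M), hnear.mono fun w hw N hw1 hwN x => ?_⟩
  set S := twistedSum T w N
  have hGT : G * (T - algebraMap 𝕜 _ w) = (T - algebraMap 𝕜 _ w) * G :=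
    (hG.sub_left (Algebra.commute_algebraMap_left w G)).eq.symm
  have hdecomp : Q = G * (T - algebraMap 𝕜 _ w) + (w - c) • G + R := by
    rw [hGT, hR, Algebra.smul_def, map_sub]
    noncomm_ring
  have hmain : ‖G (((T - algebraMap 𝕜 _ w) * S) x)‖ ≤ ‖G‖ * (2 * M * ‖x‖) :=
    G.le_opNorm_of_le (ContinuousLinearMap.le_of_opNorm_le _
      (norm_sub_algebraMap_mul_twistedSum_le hM hw1 hwN) x)
  have hshift : ‖(w - c) • G (S x)‖ ≤ ε / 2 * ‖S x‖ := by
    refine ((w - c) • G).le_of_opNorm_le ?_ (S x)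
    exact (norm_smul _ _).trans_le hw.le
  have hrest : ‖R (S x)‖ ≤ ε / 2 * ‖S x‖ := R.le_of_opNorm_le hlt.le (S x)
  calc
    ‖Q (S x)‖ = ‖G (((T - algebraMap 𝕜 _ w) * S) x) + (w - c) • G (S x) + R (S x)‖ := by
      conv_lhs => rw [hdecomp]
      rfl
    _ ≤ _ := norm_add₃_le
    _ ≤ ‖G‖ * (2 * M) * ‖x‖ + ε * ‖S x‖ := by linarith

theorem exists_forall_norm_apply_twistedSum_le [ProperSpace 𝕜] (hM : ∀ n, ‖T ^ n‖ ≤ M)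
    (hQ : ∀ c : 𝕜, ‖c‖ = 1 → Q ∈ commutantIdeal T c) (hε : 0 < ε) :
    ∃ D : ℝ, ∀ N ≠ 0, ∀ w : 𝕜, w ^ N = 1 → ∀ x,
      ‖Q (twistedSum T w N x)‖ ≤ D * ‖x‖ + ε * ‖twistedSum T w N x‖ := by
  let BoundedOn (s : Set 𝕜) : Prop := ∃ D : ℝ, ∀ w ∈ s, ∀ N : ℕ, ‖w‖ = 1 → w ^ N = 1 → ∀ x,
    ‖Q (twistedSum T w N x)‖ ≤ D * ‖x‖ + ε * ‖twistedSum T w N x‖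
  suffices BoundedOn (Metric.sphere 0 1) by
    obtain ⟨D, hD⟩ := this
    refine ⟨D, fun N hN w hwN => ?_⟩
    have hw : ‖w‖ = 1 :=
      (isOfFinOrder_iff_pow_eq_one.2 ⟨N, Nat.pos_of_ne_zero hN, hwN⟩).norm_eq_one
    exact hD w (by simpa using hw) N hw hwN
  refine (isCompact_sphere (0 : 𝕜) 1).induction_on (p := BoundedOn) ⟨0, by simp⟩ ?_ ?_ ?_
  · rintro s t hst ⟨D, hD⟩
    exact ⟨D, fun w hw => hD w (hst hw)⟩
  · rintro s t ⟨D, hD⟩ ⟨E, hE⟩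
    refine ⟨max D E, fun w hw N hw1 hwN x => ?_⟩
    rcases hw with hw | hw
    · exact (hD w hw N hw1 hwN x).trans (by gcongr; exact le_max_left D E)
    · exact (hE w hw N hw1 hwN x).trans (by gcongr; exact le_max_right D E)
  · intro c hc
    obtain ⟨D, hD⟩ := eventually_norm_apply_twistedSum_le hM (hQ c (by simpa using hc)) hε
    exact ⟨_, mem_nhdsWithin_of_mem_nhds hD, D, fun w hw => hw⟩

theorem sum_norm_sq_pow_apply_le (hM : ∀ n, ‖T ^ n‖ ≤ M) (N : ℕ) (x : X) :
    ∑ n ∈ Finset.range N, ‖(T ^ n) x‖ ^ 2 ≤ N * (M * ‖x‖) ^ 2 := by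
  have hterm : ∀ n ∈ Finset.range N, ‖(T ^ n) x‖ ^ 2 ≤ (M * ‖x‖) ^ 2 := fun n _ => by
    gcongr
    exact (T ^ n).le_of_opNorm_le (hM n) x
  simpa using Finset.sum_le_card_nsmul _ _ _ hterm

theorem natCast_mul_norm_sq_pow_apply_le (hM : ∀ n, ‖T ^ n‖ ≤ M) (N : ℕ) (x : X) :
    N * ‖(T ^ N) x‖ ^ 2 ≤ M ^ 2 * ∑ n ∈ Finset.range N, ‖(T ^ n) x‖ ^ 2 := by
  have hterm : ∀ n ∈ Finset.range N, ‖(T ^ N) x‖ ^ 2 ≤ M ^ 2 * ‖(T ^ n) x‖ ^ 2 := fun n hn => by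
    have hsplit : (T ^ N) x = (T ^ (N - n)) ((T ^ n) x) := by
      rw [← mul_apply_eq_comp, pow_sub_mul_pow T (Finset.mem_range.1 hn).le]
    rw [hsplit, ← mul_pow]
    gcongr
    exact (T ^ (N - n)).le_of_opNorm_le (hM _) _
  simpa [Finset.mul_sum] using Finset.card_nsmul_le_sum _ _ _ hterm

end Estimate

section Hilbert

variable {𝕜 X : Type*} [RCLike 𝕜] [NormedAddCommGroup X] [InnerProductSpace 𝕜 X]
  {T Q : X →L[𝕜] X} {M D ε : ℝ}

theorem sum_norm_sq_apply_twistedSum {ω : 𝕜} {N : ℕ} (hω : IsPrimitiveRoot ω N)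
    (T Q : X →L[𝕜] X) (x : X) :
    ∑ k ∈ Finset.range N, ‖Q (twistedSum T (ω ^ k) N x)‖ ^ 2 =
      N * ∑ n ∈ Finset.range N, ‖Q ((T ^ n) x)‖ ^ 2 := by
  rw [← parseval_of_isPrimitiveRoot hω]
  simp [twistedSum]

theorem sum_norm_sq_apply_pow_le {ω : 𝕜} {N : ℕ} (hN : N ≠ 0) (hω : IsPrimitiveRoot ω N)
    (hM : ∀ n, ‖T ^ n‖ ≤ M) (x : X)
    (h : ∀ w : 𝕜, w ^ N = 1 →
      ‖Q (twistedSum T w N x)‖ ≤ D * ‖x‖ + ε * ‖twistedSum T w N x‖) :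
    ∑ n ∈ Finset.range N, ‖Q ((T ^ n) x)‖ ^ 2 ≤
      2 * (D * ‖x‖) ^ 2 + 2 * ε ^ 2 * (N * (M * ‖x‖) ^ 2) := by
  have hterm (k : ℕ) : ‖Q (twistedSum T (ω ^ k) N x)‖ ^ 2 ≤
      2 * (D * ‖x‖) ^ 2 + 2 * ε ^ 2 * ‖twistedSum T (ω ^ k) N x‖ ^ 2 := by
    have hk := h (ω ^ k) (by rw [pow_right_comm, hω.pow_eq_one, one_pow])
    calc
      _ ≤ (D * ‖x‖ + ε * ‖twistedSum T (ω ^ k) N x‖) ^ 2 := by gcongr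
      _ ≤ 2 * ((D * ‖x‖) ^ 2 + (ε * ‖twistedSum T (ω ^ k) N x‖) ^ 2) := add_sq_le
      _ = _ := by ring
  have hsum : ∑ k ∈ Finset.range N, ‖twistedSum T (ω ^ k) N x‖ ^ 2 =
      N * ∑ n ∈ Finset.range N, ‖(T ^ n) x‖ ^ 2 := sum_norm_sq_apply_twistedSum hω T 1 x
  refine le_of_mul_le_mul_left ?_ (Nat.cast_pos.2 (Nat.pos_of_ne_zero hN) : (0 : ℝ) < N)
  calc
    N * ∑ n ∈ Finset.range N, ‖Q ((T ^ n) x)‖ ^ 2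
      = ∑ k ∈ Finset.range N, ‖Q (twistedSum T (ω ^ k) N x)‖ ^ 2 :=
        (sum_norm_sq_apply_twistedSum hω T Q x).symm
    _ ≤ ∑ k ∈ Finset.range N,
          (2 * (D * ‖x‖) ^ 2 + 2 * ε ^ 2 * ‖twistedSum T (ω ^ k) N x‖ ^ 2) :=
        Finset.sum_le_sum fun k _ => hterm k
    _ = N * (2 * (D * ‖x‖) ^ 2 + 2 * ε ^ 2 * ∑ n ∈ Finset.range N, ‖(T ^ n) x‖ ^ 2) := by
        rw [Finset.sum_add_distrib, ← Finset.mul_sum _ _ (2 * ε ^ 2), hsum, Finset.sum_const,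
          Finset.card_range, nsmul_eq_mul]
        ring
    _ ≤ _ := by
        gcongr
        exact sum_norm_sq_pow_apply_le hM N x

theorem norm_sq_pow_mul_le {ω : 𝕜} {N : ℕ} (hN : N ≠ 0) (hω : IsPrimitiveRoot ω N)
    (hM : ∀ n, ‖T ^ n‖ ≤ M) (hQ : Commute T Q)
    (h : ∀ w : 𝕜, w ^ N = 1 → ∀ x,
      ‖Q (twistedSum T w N x)‖ ≤ D * ‖x‖ + ε * ‖twistedSum T w N x‖) :
    ‖T ^ N * Q‖ ^ 2 ≤ 2 * M ^ 2 * D ^ 2 / N + 2 * M ^ 4 * ε ^ 2 := by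
  have hN' : (0 : ℝ) < N := Nat.cast_pos.2 (Nat.pos_of_ne_zero hN)
  have hcomm (n : ℕ) (x : X) : (T ^ n) (Q x) = Q ((T ^ n) x) :=
    DFunLike.congr_fun (hQ.pow_left n).eq x
  have hpoint (x : X) :
      ‖(T ^ N * Q) x‖ ^ 2 ≤ (2 * M ^ 2 * D ^ 2 / N + 2 * M ^ 4 * ε ^ 2) * ‖x‖ ^ 2 := by
    refine le_of_mul_le_mul_left ?_ hN'
    calc
      N * ‖(T ^ N) (Q x)‖ ^ 2 ≤ M ^ 2 * ∑ n ∈ Finset.range N, ‖(T ^ n) (Q x)‖ ^ 2 :=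
        natCast_mul_norm_sq_pow_apply_le hM N (Q x)
      _ ≤ M ^ 2 * (2 * (D * ‖x‖) ^ 2 + 2 * ε ^ 2 * (N * (M * ‖x‖) ^ 2)) := by
        simp only [hcomm]
        gcongr
        exact sum_norm_sq_apply_pow_le hN hω hM x fun w hwN => h w hwN x
      _ = N * ((2 * M ^ 2 * D ^ 2 / N + 2 * M ^ 4 * ε ^ 2) * ‖x‖ ^ 2) := by
        field_simp
  rw [← Real.le_sqrt (norm_nonneg _) (by positivity)]
  refine ContinuousLinearMap.opNorm_le_bound _ (Real.sqrt_nonneg _) fun x => ?_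
  rw [← Real.sqrt_sq (norm_nonneg x), ← Real.sqrt_mul (by positivity)]
  exact Real.le_sqrt_of_sq_le (hpoint x)

end Hilbert

theorem tendsto_norm_pow_mul_of_mem_commutantIdeal {X : Type*} [NormedAddCommGroup X]
    [InnerProductSpace ℂ X] {T Q : X →L[ℂ] X} {M : ℝ} (hM : ∀ n, ‖T ^ n‖ ≤ M) (hQ : Commute T Q)
    (h : ∀ c ∈ spectrum ℂ T, ‖c‖ = 1 → Q ∈ commutantIdeal T c) :
    Tendsto (fun n => ‖T ^ n * Q‖) atTop (𝓝 0) := by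
  have hmem (c : ℂ) (hc : ‖c‖ = 1) : Q ∈ commutantIdeal T c := by
    by_cases hspec : c ∈ spectrum ℂ T
    · exact h c hspec hc
    · exact mem_commutantIdeal_of_notMem_spectrum hQ hspec
  suffices hsq : Tendsto (fun n => ‖T ^ n * Q‖ ^ 2) atTop (𝓝 0) by simpa using hsq.sqrt
  refine tendsto_order.2 ⟨fun b hb => .of_forall fun n => hb.trans_le (sq_nonneg _), fun δ hδ => ?_⟩
  obtain ⟨ε, hε_small, hε⟩ : ∃ ε : ℝ, 2 * M ^ 4 * ε ^ 2 < δ ∧ 0 < ε := by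
    have hlim : Tendsto (fun ε : ℝ => 2 * M ^ 4 * ε ^ 2) (𝓝[>] 0) (𝓝 0) :=
      tendsto_nhdsWithin_of_tendsto_nhds <| Continuous.tendsto' (by fun_prop) 0 0 (by simp)
    exact ((hlim.eventually_lt_const hδ).and self_mem_nhdsWithin).exists
  obtain ⟨D, hD⟩ := exists_forall_norm_apply_twistedSum_le hM hmem hε
  have hbound : Tendsto (fun N : ℕ => 2 * M ^ 2 * D ^ 2 / (N : ℝ) + 2 * M ^ 4 * ε ^ 2) atTop
      (𝓝 (0 + 2 * M ^ 4 * ε ^ 2)) :=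
    (tendsto_const_nhds.div_atTop tendsto_natCast_atTop_atTop).add_const _
  filter_upwards [hbound.eventually_lt_const (by simpa using hε_small),
    eventually_ne_atTop 0] with N hlt hN
  exact (norm_sq_pow_mul_le hN (Complex.isPrimitiveRoot_exp N hN) hM hQ
    (hD N hN)).trans_lt hlt

/-- ℤ₊-instance of Theorem 3.1: for a power-bounded operator `T` on a complex Hilbert
space and `a ∈ ℓ¹(ℕ)`, the following are equivalent: (i) `â` vanishes on `σ(T) ∩ 𝕋`;
(ii) the Cesàro averages `(1/N)·‖∑_{n<N} conj(λ)ⁿ Tⁿ â(T)‖` tend to `0` for every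
`λ ∈ σ(T) ∩ 𝕋`; (iii) `‖Tⁿ â(T)‖ → 0`. -/
theorem stmt_7 {X : Type*} [NormedAddCommGroup X] [InnerProductSpace ℂ X] [CompleteSpace X]
    (T : X →L[ℂ] X) (hT : ∃ M : ℝ, ∀ n : ℕ, ‖T ^ n‖ ≤ M)
    (a : ℕ → ℂ) (ha : Summable fun n : ℕ => ‖a n‖) :
    [ (∀ lam ∈ spectrum ℂ T, ‖lam‖ = 1 → (∑' m : ℕ, a m * lam ^ m) = 0),
      (∀ lam ∈ spectrum ℂ T, ‖lam‖ = 1 →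
        Tendsto (fun N : ℕ =>
            (1 / (N : ℝ)) * ‖∑ n ∈ Finset.range N, (starRingEnd ℂ lam) ^ n •
              (T ^ n * (∑' m : ℕ, a m • T ^ m))‖)
          atTop (nhds 0)),
      Tendsto (fun n : ℕ => ‖T ^ n * (∑' m : ℕ, a m • T ^ m)‖) atTop (nhds 0) ].TFAE := by
  obtain ⟨M, hM⟩ := hT
  have hQ : Commute T (∑' m, a m • T ^ m) :=
    .tsum_right T fun m => (Commute.self_pow T m).smul_right (a m)
  have hmem (lam : ℂ) (hspec : lam ∈ spectrum ℂ T) (hlam : ‖lam‖ = 1) :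
      ∑' m, a m • T ^ m ∈ commutantIdeal T lam ↔ ∑' m, a m * lam ^ m = 0 :=
    tsum_mem_commutantIdeal_iff (summable_smul_of_norm_le ha hM)
      (Summable.of_norm (by simpa [hlam] using ha)) hspec
  have hconj (lam : ℂ) (hlam : ‖lam‖ = 1) (N : ℕ) :
      ∑ n ∈ Finset.range N, (starRingEnd ℂ lam) ^ n • (T ^ n * ∑' m, a m • T ^ m) =
        twistedSum T lam N * ∑' m, a m • T ^ m := by
    rw [twistedSum_mul, RCLike.inv_eq_conj hlam]
  tfae_have 1 → 3 := fun h => tendsto_norm_pow_mul_of_mem_commutantIdeal hM hQ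
    fun lam hspec hlam => (hmem lam hspec hlam).2 (h lam hspec hlam)
  tfae_have 3 → 2 := fun h lam _ hlam => by
    simpa only [hconj lam hlam] using tendsto_mean_norm_twistedSum_mul hlam h
  tfae_have 2 → 1 := fun h lam hspec hlam => (hmem lam hspec hlam).1 <|
    mem_commutantIdeal_of_tendsto_mean hQ (norm_ne_zero_iff.1 (by simp [hlam])) <| by
      simpa only [hconj lam hlam] using h lam hspec hlam
  tfae_finish
end

section
/- Let X be a complex Hilbert space, let T ∈ B(X) be power-bounded, and let a ∈ ℓ¹(ℕ) be such that â(λ) = 0 for every λ ∈ σ(T) ∩ 𝕋. Then ‖Tⁿ â(T)‖ → 0 as n → ∞ in the operator norm. (The implication (i)⇒(iii) of Theorem 3.1; Léka's Katznelson–Tzafriri theorem for power-bounded operators on Hilbert space.) -/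
open Filter Topology

/-!
Let `U` be the bilateral shift on `ℓ²(ℤ, X)` and let `D` act as `T` in each coordinate, so that `U`
is a unitary operator commuting with `D` and `σ(D) ⊆ σ(T)`.

The functions `f` for which `f(U)` lies in the closed left ideal generated by `U - D` form a closed
ideal of `C(σ(U))`, and by a perturbation argument the common zeros of this ideal belong to `σ(D)`.
Hence `â(U)` lies in the closed left ideal, and so does `â(D)`, because each `U ^ m - D ^ m` is a
multiple of `U - D`.

Now apply an approximation `S (U - D)` of `â(D)` to an orbit segment `(x, T x, …, T ^ (n - 1) x)`.
There `U - D` telescopes to two boundary terms, of norm `O(‖x‖)` uniformly in `n`, while the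
segment itself has norm `O(√n ‖x‖)`; and by power-boundedness its image under `â(D)` has norm at
least a constant times `√n ‖T ^ n â(T) x‖`. Dividing by `√n` gives the theorem.
-/

open scoped ENNReal lp

section ClosedIdeals

variable {𝕜 S A : Type*} [RCLike 𝕜] [TopologicalSpace S] [CompactSpace S]

theorem exists_norm_le_mul_eq_mul_of_apply_eq_zero (h : C(S, 𝕜)) {s : S} (hs : h s = 0)
    {r : ℝ} (hr : 0 < r) :
    ∃ q g : C(S, 𝕜), ‖q‖ ≤ r ∧ g s ≠ 0 ∧ h * g = q * g := by
  have hmax (t : S) : 0 < max r ‖h t‖ := lt_max_of_lt_left hr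
  let q : C(S, 𝕜) :=
    ⟨fun t => h t * ((r / max r ‖h t‖ : ℝ) : 𝕜), by
      have : Continuous fun t => r / max r ‖h t‖ :=
        Continuous.div (by fun_prop) (by fun_prop) fun t => (hmax t).ne'
      fun_prop⟩
  let g : C(S, 𝕜) := ⟨fun t => ((max 0 (r - ‖h t‖) : ℝ) : 𝕜), by fun_prop⟩
  refine ⟨q, g, (ContinuousMap.norm_le _ hr.le).2 fun t => ?_, ?_, ?_⟩
  · calc ‖q t‖ = ‖h t‖ * r / max r ‖h t‖ := by
          simp [q, abs_of_pos hr, abs_of_pos (hmax t), mul_div_assoc]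
      _ ≤ r := by
          rw [div_le_iff₀ (hmax t), mul_comm]
          gcongr
          exact le_max_right _ _
  · simp [g, hs, hr.le, hr.ne']
  · ext t
    rcases le_total r ‖h t‖ with hrt | hrt
    · simp [g, hrt]
    · simp [q, max_eq_left hrt, hr.ne']

variable [NormedRing A] [CompleteSpace A] [NormedAlgebra 𝕜 A]
  {φ : C(S, 𝕜) →ₐ[𝕜] A} {h : C(S, 𝕜)} {d : A}

theorem exists_apply_ne_zero_map_mem_span_sub (hφ : Continuous φ) (hd : ∀ g, Commute (φ g) d)
    {s : S} (hs : h s ∉ spectrum 𝕜 d) :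
    ∃ g, g s ≠ 0 ∧ φ g ∈ Ideal.span {φ h - d} := by
  obtain ⟨R, hR⟩ : ∃ R, R * (algebraMap 𝕜 A (h s) - d) = 1 :=
    (spectrum.notMem_iff.1 hs).exists_left_inv
  obtain ⟨r, hr, hunit⟩ : ∃ r > 0, ∀ q, ‖q‖ ≤ r → IsUnit (1 - R * φ q) := by
    have hlim : Tendsto (fun q => 1 - R * φ q) (𝓝 0) (𝓝 1) := by
      have hcont : Continuous fun q => 1 - R * φ q := by fun_prop
      simpa using hcont.tendsto 0
    obtain ⟨r, hr, hball⟩ := Metric.nhds_basis_closedBall.eventually_iff.1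
      (hlim.eventually (Units.nhds (1 : Aˣ)))
    exact ⟨r, hr, fun q hq => hball (mem_closedBall_zero_iff.2 hq)⟩
  -- On the support of `g` the function `h s - h` agrees with the small function `q`, so there
  -- `φ h - d` is a small perturbation of the invertible element `h s - d`.
  obtain ⟨q, g, hq, hgs, hqg⟩ := exists_norm_le_mul_eq_mul_of_apply_eq_zero
    (algebraMap 𝕜 C(S, 𝕜) (h s) - h) (s := s) (by simp) hr
  refine ⟨g, hgs, Ideal.mem_span_singleton'.2 ?_⟩
  obtain ⟨V, hV⟩ := (hunit q hq).exists_left_inv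
  have hsub : (algebraMap 𝕜 A (h s) - d) * φ g = φ q * φ g + φ g * (φ h - d) := by
    rw [← map_mul φ q g, ← hqg, map_mul, map_sub, AlgHomClass.commutes, mul_sub, (hd g).eq,
      ← map_mul φ g h, mul_comm g h, map_mul]
    noncomm_ring
  refine ⟨V * R * φ g, ?_⟩
  calc V * R * φ g * (φ h - d)
      = V * (R * ((algebraMap 𝕜 A (h s) - d) * φ g) - R * φ q * φ g) := by
        rw [hsub]; noncomm_ring
    _ = V * (1 - R * φ q) * φ g := by rw [← mul_assoc R, hR]; noncomm_ring
    _ = φ g := by rw [hV, one_mul]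

theorem map_mem_closure_span_sub [T2Space S] (hφ : Continuous φ) (hd : ∀ g, Commute (φ g) d)
    {f : C(S, 𝕜)} (hf : ∀ s, h s ∈ spectrum 𝕜 d → f s = 0) :
    φ f ∈ (Ideal.span {φ h - d}).closure := by
  let J : Ideal C(S, 𝕜) := (Ideal.span {φ h - d}).closure.comap φ
  have hJ : IsClosed (J : Set C(S, 𝕜)) := isClosed_closure.preimage hφ
  change f ∈ J
  rw [← ContinuousMap.idealOfSet_ofIdeal_isClosed hJ, ContinuousMap.mem_idealOfSet]
  intro s hs
  refine hf s (not_not.1 fun hsd => ?_)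
  obtain ⟨g, hgs, hg⟩ := exists_apply_ne_zero_map_mem_span_sub hφ hd hsd
  exact hgs (ContinuousMap.notMem_setOfIdeal.1 hs (subset_closure hg))

end ClosedIdeals

section AbsolutelyConvergentSeries

variable {𝕜 A : Type*} [NormedField 𝕜] [NormedRing A] [NormedAlgebra 𝕜 A] {a : ℕ → 𝕜}

theorem summable_smul_pow_of_norm_pow_le [CompleteSpace A] {x : A} {M : ℝ}
    (ha : Summable fun n => ‖a n‖) (hx : ∀ n, ‖x ^ n‖ ≤ M) : Summable fun n => a n • x ^ n :=
  .of_norm_bounded (ha.mul_right M) fun n => by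
    rw [norm_smul]
    gcongr
    exact hx n

theorem tsum_smul_pow_sub_tsum_smul_pow_mem_closure_span {x y : A} (hxy : Commute x y)
    (hx : Summable fun n => a n • x ^ n) (hy : Summable fun n => a n • y ^ n) :
    ∑' n, a n • x ^ n - ∑' n, a n • y ^ n ∈ (Ideal.span {x - y}).closure := by
  rw [← hx.tsum_sub hy]
  refine tsum_mem (s := (Ideal.span {x - y}).closure) isClosed_closure fun n => subset_closure ?_
  rw [← smul_sub, ← hxy.geom_sum₂_mul, ← smul_mul_assoc]
  exact Ideal.mul_mem_left _ _ (Ideal.mem_span_singleton_self _)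

end AbsolutelyConvergentSeries

theorem tsum_smul_pow_mem_closure_span_map_sub {𝕜 S A : Type*} [RCLike 𝕜] [TopologicalSpace S]
    [CompactSpace S] [T2Space S] [NormedRing A] [CompleteSpace A] [NormedAlgebra 𝕜 A]
    {φ : C(S, 𝕜) →ₐ[𝕜] A} (hφ : Continuous φ) {h : C(S, 𝕜)} {N : ℝ} (hh : ∀ n, ‖h ^ n‖ ≤ N)
    {d : A} {M : ℝ} (hd : ∀ n, ‖d ^ n‖ ≤ M) (hcomm : ∀ g, Commute (φ g) d)
    {a : ℕ → 𝕜} (ha : Summable fun n => ‖a n‖)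
    (hzero : ∀ s, h s ∈ spectrum 𝕜 d → ∑' n, a n * h s ^ n = 0) :
    ∑' n, a n • d ^ n ∈ (Ideal.span {φ h - d}).closure := by
  have hsum := summable_smul_pow_of_norm_pow_le ha hh
  have hφsum : HasSum (fun n => a n • φ h ^ n) (φ (∑' n, a n • h ^ n)) := by
    simpa [Function.comp_def] using hsum.hasSum.map φ hφ
  have hmem : ∑' n, a n • φ h ^ n ∈ (Ideal.span {φ h - d}).closure := by
    rw [hφsum.tsum_eq]
    refine map_mem_closure_span_sub hφ hcomm fun s hs => ?_
    simpa [← ContinuousMap.tsum_apply hsum] using hzero s hs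
  exact ((Ideal.span {φ h - d}).closure.sub_mem_iff_right hmem).1
    (tsum_smul_pow_sub_tsum_smul_pow_mem_closure_span (hcomm h) hφsum.summable
      (summable_smul_pow_of_norm_pow_le ha hd))

theorem tsum_smul_pow_mem_closure_span_sub_of_isStarNormal {A : Type*} [CStarAlgebra A]
    {u d : A} (hu : IsStarNormal u) (hu_norm : ‖u‖ ≤ 1) (hud : Commute u d)
    {M : ℝ} (hd : ∀ n, ‖d ^ n‖ ≤ M) {a : ℕ → ℂ} (ha : Summable fun n => ‖a n‖)
    (hzero : ∀ z ∈ spectrum ℂ u, z ∈ spectrum ℂ d → ∑' n, a n * z ^ n = 0) :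
    ∑' n, a n • d ^ n ∈ (Ideal.span {u - d}).closure := by
  let ι : C(spectrum ℂ u, ℂ) := (ContinuousMap.id ℂ).restrict (spectrum ℂ u)
  have hι : cfcHom hu ι = u := cfcHom_id hu
  have hι_pow (n : ℕ) : ‖ι ^ n‖ ≤ 1 := by
    refine (ContinuousMap.norm_le _ zero_le_one).2 fun z => ?_
    have hz : ‖ι z‖ ≤ 1 := (ι.norm_coe_le_norm z).trans (by rwa [← norm_cfcHom u ι, hι])
    simpa using pow_le_one₀ (norm_nonneg _) hz
  have := tsum_smul_pow_mem_closure_span_map_sub (φ := (cfcHom hu).toAlgHom) (cfcHom_continuous hu)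
    hι_pow hd (fun g => hud.cfcHom hu (hu.commute_star_left hud) g) ha
    fun z => hzero z z.2
  simpa [hι] using this

section SequenceSpaces

theorem memℓp_comp_of_injective {α β E : Type*} [NormedAddCommGroup E] {p : ℝ≥0∞} {f : β → E}
    (hf : Memℓp f p) {e : α → β} (he : e.Injective) : Memℓp (f ∘ e) p := by
  rcases p.trichotomy with rfl | rfl | hp
  · exact memℓp_zero ((memℓp_zero_iff.1 hf).preimage he.injOn)
  · exact memℓp_infty ((memℓp_infty_iff.1 hf).mono (Set.range_comp_subset_range e (‖f ·‖)))
  · exact memℓp_gen ((hf.summable hp).comp_injective he)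

variable (𝕜 E : Type*) [NontriviallyNormedField 𝕜] [NormedAddCommGroup E] [NormedSpace 𝕜 E]
  {α β : Type*} (p : ℝ≥0∞) [Fact (1 ≤ p)]

/-- The isometric isomorphism `f ↦ f ∘ e` of `ℓ^p` spaces induced by a bijection `e` of the
index types. -/
noncomputable def lpReindex (e : α ≃ β) : ℓ^p(β, E) ≃ₗᵢ[𝕜] ℓ^p(α, E) where
  toFun f := ⟨f ∘ e, memℓp_comp_of_injective (lp.memℓp f) e.injective⟩
  invFun f := ⟨f ∘ e.symm, memℓp_comp_of_injective (lp.memℓp f) e.symm.injective⟩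
  map_add' _ _ := rfl
  map_smul' _ _ := rfl
  left_inv f := by ext; simp
  right_inv f := by ext; simp
  norm_map' f := by
    rcases p.dichotomy with rfl | hp
    · simp only [lp.norm_eq_ciSup]
      exact e.iSup_comp (g := fun b => ‖f b‖)
    · have hp : 0 < p.toReal := by positivity
      simp only [lp.norm_eq_tsum_rpow hp]
      congr 1
      exact e.tsum_eq fun b => ‖f b‖ ^ p.toReal

@[simp]
theorem lpReindex_apply (e : α ≃ β) (f : ℓ^p(β, E)) (i : α) : lpReindex 𝕜 E p e f i = f (e i) :=
  rfl

@[simp]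
theorem lpReindex_single [DecidableEq α] [DecidableEq β] (e : α ≃ β) (i : β) (x : E) :
    lpReindex 𝕜 E p e (lp.single p i x) = lp.single p (e.symm i) x := by
  ext j
  simp [Pi.single_apply, e.eq_symm_apply]

/-- The shift `f ↦ (i ↦ f (i + 1))` on the two-sided sequence space `ℓ^p(ℤ, E)`. It maps
`lp.single p i x` to `lp.single p (i - 1) x`. -/
noncomputable def bilateralShift : ℓ^p(ℤ, E) →L[𝕜] ℓ^p(ℤ, E) :=
  (lpReindex 𝕜 E p (Equiv.addRight (1 : ℤ))).toContinuousLinearEquiv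

variable {𝕜 E}

theorem bilateralShift_single (i : ℤ) (x : E) :
    bilateralShift 𝕜 E p (lp.single p i x) = lp.single p (i - 1) x :=
  lpReindex_single 𝕜 E p (Equiv.addRight 1) i x

theorem norm_bilateralShift_le : ‖bilateralShift 𝕜 E p‖ ≤ 1 :=
  (lpReindex 𝕜 E p (Equiv.addRight (1 : ℤ))).toLinearIsometry.norm_toContinuousLinearMap_le

variable (α)

/-- The representation of operators on `E` as diagonal (coordinatewise acting) operators on
`ℓ^p(α, E)`. -/
noncomputable def lpDiagonal : (E →L[𝕜] E) →ₐ[𝕜] (ℓ^p(α, E) →L[𝕜] ℓ^p(α, E)) where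
  toFun T := lp.mapCLM p (fun _ : α => T) (norm_nonneg T) fun _ => le_rfl
  map_one' := rfl
  map_mul' _ _ := rfl
  map_zero' := rfl
  map_add' _ _ := rfl
  commutes' _ := rfl

variable {α}

@[simp]
theorem lpDiagonal_single [DecidableEq α] (T : E →L[𝕜] E) (i : α) (x : E) :
    lpDiagonal α p T (lp.single p i x) = lp.single p i (T x) := by
  ext j
  exact Pi.apply_single (fun _ => T) (fun _ => map_zero T) i x j

theorem norm_lpDiagonal_le (T : E →L[𝕜] E) : ‖lpDiagonal α p T‖ ≤ ‖T‖ :=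
  lp.norm_mapCLM_le p (fun _ : α => T) (norm_nonneg T) fun _ => le_rfl

theorem continuous_lpDiagonal :
    Continuous (lpDiagonal α p : (E →L[𝕜] E) → (ℓ^p(α, E) →L[𝕜] ℓ^p(α, E))) :=
  AddMonoidHomClass.continuous_of_bound (lpDiagonal α p) 1 fun T => by
    simpa using norm_lpDiagonal_le p T

theorem commute_bilateralShift_lpDiagonal (T : E →L[𝕜] E) :
    Commute (bilateralShift 𝕜 E p) (lpDiagonal ℤ p T) :=
  rfl

theorem bilateralShift_mem_unitary {H : Type*} [NormedAddCommGroup H] [InnerProductSpace ℂ H]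
    [CompleteSpace H] : bilateralShift ℂ H 2 ∈ unitary (ℓ²(ℤ, H) →L[ℂ] ℓ²(ℤ, H)) :=
  (Unitary.linearIsometryEquiv.symm (lpReindex ℂ H 2 (Equiv.addRight (1 : ℤ)))).2

end SequenceSpaces

section Orbits

variable {𝕜 E : Type*} [NontriviallyNormedField 𝕜] [NormedAddCommGroup E] [NormedSpace 𝕜 E]
  {p : ℝ≥0∞} {T Q : E →L[𝕜] E} {M : ℝ}

variable (p) in
/-- The finite piece `x, T x, …, T ^ (n - 1) x` of the orbit of `x` under `T`, as the vector of
`ℓ^p(ℤ, E)` with these entries at the places `0, …, n - 1` and zeros elsewhere. -/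
noncomputable def orbitSegment (T : E →L[𝕜] E) (x : E) (n : ℕ) : ℓ^p(ℤ, E) :=
  ∑ m ∈ Finset.range n, lp.single p (m : ℤ) ((T ^ m) x)

theorem norm_orbitSegment_rpow (hp : 0 < p.toReal) (T : E →L[𝕜] E) (x : E) (n : ℕ) :
    ‖orbitSegment p T x n‖ ^ p.toReal = ∑ m ∈ Finset.range n, ‖(T ^ m) x‖ ^ p.toReal := by
  simpa [orbitSegment] using lp.norm_sum_single (E := fun _ : ℤ => E) hp
    (fun i => (T ^ i.toNat) x) ((Finset.range n).map Nat.castEmbedding)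

theorem natCast_rpow_inv_mul_rpow {r c : ℝ} (hr : r ≠ 0) (hc : 0 ≤ c) (n : ℕ) :
    ((n : ℝ) ^ r⁻¹ * c) ^ r = n * c ^ r := by
  rw [Real.mul_rpow (by positivity) hc, Real.rpow_inv_rpow n.cast_nonneg hr]

theorem norm_orbitSegment_le (hp : 0 < p.toReal) {x : E} {C : ℝ} (hx : ∀ m, ‖(T ^ m) x‖ ≤ C)
    (n : ℕ) : ‖orbitSegment p T x n‖ ≤ (n : ℝ) ^ p.toReal⁻¹ * C := by
  have hC : 0 ≤ C := (norm_nonneg _).trans (hx 0)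
  rw [← Real.rpow_le_rpow_iff (lp.norm_nonneg' _) (by positivity) hp,
    natCast_rpow_inv_mul_rpow hp.ne' hC]
  calc ‖orbitSegment p T x n‖ ^ p.toReal = ∑ m ∈ Finset.range n, ‖(T ^ m) x‖ ^ p.toReal :=
        norm_orbitSegment_rpow hp T x n
    _ ≤ ∑ _m ∈ Finset.range n, C ^ p.toReal := by gcongr; exact hx _
    _ = n * C ^ p.toReal := by simp

theorem rpow_inv_mul_norm_pow_apply_le (hp : 0 < p.toReal) (hT : ∀ n, ‖T ^ n‖ ≤ M) (x : E)
    (n : ℕ) : (n : ℝ) ^ p.toReal⁻¹ * ‖(T ^ n) x‖ ≤ M * ‖orbitSegment p T x n‖ := by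
  have hM : 0 ≤ M := (norm_nonneg _).trans (hT 0)
  have hpow_le (m : ℕ) (hm : m ≤ n) : ‖(T ^ n) x‖ ≤ M * ‖(T ^ m) x‖ := by
    rw [← Nat.sub_add_cancel hm, pow_add]
    exact (T ^ (n - m)).le_of_opNorm_le (hT _) _
  rw [← Real.rpow_le_rpow_iff (by positivity) (mul_nonneg hM (lp.norm_nonneg' _)) hp,
    natCast_rpow_inv_mul_rpow hp.ne' (norm_nonneg _), Real.mul_rpow hM (lp.norm_nonneg' _),
    norm_orbitSegment_rpow hp]
  calc n * ‖(T ^ n) x‖ ^ p.toReal = ∑ _m ∈ Finset.range n, ‖(T ^ n) x‖ ^ p.toReal := by simp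
    _ ≤ ∑ m ∈ Finset.range n, (M * ‖(T ^ m) x‖) ^ p.toReal := by
        gcongr with m hm
        exact hpow_le m (Finset.mem_range.1 hm).le
    _ = M ^ p.toReal * ∑ m ∈ Finset.range n, ‖(T ^ m) x‖ ^ p.toReal := by
        simp only [Real.mul_rpow hM (norm_nonneg _), Finset.mul_sum]

variable [Fact (1 ≤ p)]

theorem lpDiagonal_orbitSegment (hQT : Commute Q T) (x : E) (n : ℕ) :
    lpDiagonal ℤ p Q (orbitSegment p T x n) = orbitSegment p T (Q x) n := by
  simp only [orbitSegment, map_sum, lpDiagonal_single]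
  refine Finset.sum_congr rfl fun m _ => ?_
  rw [← mul_apply_eq_comp, (hQT.pow_right m).eq, mul_apply_eq_comp]

variable (p) in
theorem bilateralShift_sub_lpDiagonal_orbitSegment (T : E →L[𝕜] E) (x : E) (n : ℕ) :
    (bilateralShift 𝕜 E p - lpDiagonal ℤ p T) (orbitSegment p T x n) =
      lp.single p (-1) x - lp.single p ((n : ℤ) - 1) ((T ^ n) x) := by
  have hterm (m : ℕ) :
      (bilateralShift 𝕜 E p - lpDiagonal ℤ p T) (lp.single p (m : ℤ) ((T ^ m) x)) =
        lp.single p ((m : ℤ) - 1) ((T ^ m) x) -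
          lp.single p (((m + 1 : ℕ) : ℤ) - 1) ((T ^ (m + 1)) x) := by
    simp [bilateralShift_single, pow_succ']
  simp only [orbitSegment, map_sum, hterm]
  simpa using Finset.sum_range_sub'
    (fun m : ℕ => lp.single (E := fun _ : ℤ => E) p ((m : ℤ) - 1) ((T ^ m) x)) n

theorem norm_bilateralShift_sub_lpDiagonal_orbitSegment_le (hT : ∀ n, ‖T ^ n‖ ≤ M) (x : E)
    (n : ℕ) :
    ‖(bilateralShift 𝕜 E p - lpDiagonal ℤ p T) (orbitSegment p T x n)‖ ≤ (1 + M) * ‖x‖ := by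
  have hp : 0 < p := zero_lt_one.trans_le Fact.out
  rw [bilateralShift_sub_lpDiagonal_orbitSegment, add_mul, one_mul]
  refine (norm_sub_le _ _).trans ?_
  rw [lp.norm_single hp, lp.norm_single hp]
  gcongr
  exact (T ^ n).le_of_opNorm_le (hT n) x

theorem rpow_inv_mul_norm_pow_mul_apply_le (hp : 0 < p.toReal) (hT : ∀ n, ‖T ^ n‖ ≤ M)
    (hQT : Commute Q T) (S : ℓ^p(ℤ, E) →L[𝕜] ℓ^p(ℤ, E)) (x : E) (n : ℕ) :
    (n : ℝ) ^ p.toReal⁻¹ * ‖(T ^ n * Q) x‖ ≤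
      M * (‖lpDiagonal ℤ p Q - S * (bilateralShift 𝕜 E p - lpDiagonal ℤ p T)‖ *
        ((n : ℝ) ^ p.toReal⁻¹ * M) + ‖S‖ * (1 + M)) * ‖x‖ := by
  have hM : 0 ≤ M := (norm_nonneg _).trans (hT 0)
  set w : ℝ := (n : ℝ) ^ p.toReal⁻¹
  set Δ := bilateralShift 𝕜 E p - lpDiagonal ℤ p T
  set η := orbitSegment p T x n
  have hη : ‖η‖ ≤ w * (M * ‖x‖) :=
    norm_orbitSegment_le hp (fun m => (T ^ m).le_of_opNorm_le (hT m) x) n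
  calc w * ‖(T ^ n * Q) x‖ ≤ M * ‖lpDiagonal ℤ p Q η‖ := by
        rw [lpDiagonal_orbitSegment hQT]
        exact rpow_inv_mul_norm_pow_apply_le hp hT (Q x) n
    _ = M * ‖(lpDiagonal ℤ p Q - S * Δ) η + S (Δ η)‖ := by simp
    _ ≤ M * (‖lpDiagonal ℤ p Q - S * Δ‖ * (w * (M * ‖x‖)) + ‖S‖ * ((1 + M) * ‖x‖)) := by
        gcongr
        refine norm_add_le_of_le (ContinuousLinearMap.le_opNorm_of_le _ hη) ?_
        exact S.le_opNorm_of_le (norm_bilateralShift_sub_lpDiagonal_orbitSegment_le hT x n)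
    _ = _ := by ring

theorem tendsto_norm_pow_mul_of_lpDiagonal_mem_closure (hp : 0 < p.toReal)
    (hT : ∀ n, ‖T ^ n‖ ≤ M) (hQT : Commute Q T)
    (hQ : lpDiagonal ℤ p Q ∈
      (Ideal.span {bilateralShift 𝕜 E p - lpDiagonal ℤ p T}).closure) :
    Tendsto (fun n => ‖T ^ n * Q‖) atTop (𝓝 0) := by
  have hM : 0 ≤ M := (norm_nonneg _).trans (hT 0)
  refine tendsto_order.2 ⟨fun b hb => .of_forall fun n => hb.trans_le (norm_nonneg _),
    fun δ hδ => ?_⟩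
  obtain ⟨ε, hε, hεδ⟩ := exists_pos_mul_lt hδ (M * M)
  obtain ⟨B, hB, hQB⟩ := Metric.mem_closure_iff.1 hQ ε hε
  obtain ⟨S, rfl⟩ := Ideal.mem_span_singleton'.1 hB
  rw [dist_eq_norm] at hQB
  have hw : Tendsto (fun n : ℕ => (n : ℝ) ^ p.toReal⁻¹) atTop atTop :=
    (tendsto_rpow_atTop (inv_pos.2 hp)).comp tendsto_natCast_atTop_atTop
  have hlim : Tendsto (fun n : ℕ => M * M * ε + M * (‖S‖ * (1 + M)) / (n : ℝ) ^ p.toReal⁻¹)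
      atTop (𝓝 (M * M * ε)) := by
    simpa using (hw.const_div_atTop (M * (‖S‖ * (1 + M)))).const_add (M * M * ε)
  filter_upwards [hlim.eventually_lt_const hεδ, hw.eventually_gt_atTop 0] with n hn hwn
  refine (ContinuousLinearMap.opNorm_le_bound _ (by positivity) fun x => ?_).trans_lt hn
  have hx := rpow_inv_mul_norm_pow_mul_apply_le hp hT hQT S x n
  generalize (n : ℝ) ^ p.toReal⁻¹ = w at hwn hx ⊢
  rw [← mul_le_mul_iff_right₀ hwn]
  calc w * ‖(T ^ n * Q) x‖ ≤ _ := hx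
    _ ≤ M * (ε * (w * M) + ‖S‖ * (1 + M)) * ‖x‖ := by gcongr
    _ = w * ((M * M * ε + M * (‖S‖ * (1 + M)) / w) * ‖x‖) := by field_simp

end Orbits

/-- Léka's Katznelson–Tzafriri theorem (implication (i)⇒(iii) of Theorem 3.1): if `T`
is power-bounded on a complex Hilbert space and `a ∈ ℓ¹(ℕ)` satisfies `â(λ) = 0` for
every `λ ∈ σ(T) ∩ 𝕋`, then `‖Tⁿ â(T)‖ → 0`. -/
theorem stmt_8 {X : Type*} [NormedAddCommGroup X] [InnerProductSpace ℂ X] [CompleteSpace X]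
    (T : X →L[ℂ] X) (hT : ∃ M : ℝ, ∀ n : ℕ, ‖T ^ n‖ ≤ M)
    (a : ℕ → ℂ) (ha : Summable fun n : ℕ => ‖a n‖)
    (h : ∀ lam ∈ spectrum ℂ T, ‖lam‖ = 1 → (∑' m : ℕ, a m * lam ^ m) = 0) :
    Tendsto (fun n : ℕ => ‖T ^ n * (∑' m : ℕ, a m • T ^ m)‖) atTop (nhds 0) := by
  obtain ⟨M, hM⟩ := hT
  set Q := ∑' m : ℕ, a m • T ^ m
  have hsum : Summable fun m => a m • T ^ m := summable_smul_pow_of_norm_pow_le ha hM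
  have hQT : Commute Q T := .tsum_left T fun m => ((Commute.refl T).pow_left m).smul_left (a m)
  set U := bilateralShift ℂ X 2
  set D := lpDiagonal ℤ 2 T
  have hU : U ∈ unitary _ := bilateralShift_mem_unitary
  have hD (n : ℕ) : ‖D ^ n‖ ≤ M := by
    rw [← map_pow]
    exact (norm_lpDiagonal_le 2 (T ^ n)).trans (hM n)
  have hQD : ∑' m, a m • D ^ m = lpDiagonal ℤ 2 Q := by
    simpa using (hsum.hasSum.map (lpDiagonal ℤ 2) (continuous_lpDiagonal 2)).tsum_eq
  have hzero (z : ℂ) (hzU : z ∈ spectrum ℂ U) (hzD : z ∈ spectrum ℂ D) :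
      ∑' m, a m * z ^ m = 0 :=
    h z (AlgHom.spectrum_apply_subset (lpDiagonal ℤ 2) T hzD)
      (by simpa using spectrum.subset_circle_of_unitary hU hzU)
  refine tendsto_norm_pow_mul_of_lpDiagonal_mem_closure (p := 2) (by simp) hM hQT ?_
  rw [← hQD]
  exact tsum_smul_pow_mem_closure_span_sub_of_isStarNormal (isStarNormal_of_mem_unitary hU)
    (norm_bilateralShift_le 2) (commute_bilateralShift_lpDiagonal 2 T) hD ha hzero
end

section
/- Let X be a complex Hilbert space, let T ∈ B(X) be a contraction (‖T‖ ≤ 1), let Λ := σ(T) ∩ 𝕋, and let a ∈ ℓ¹(ℕ). Then for every x ∈ X the (nonincreasing) sequence ‖Tⁿ â(T) x‖ satisfies limsup_{n→∞} ‖Tⁿ â(T) x‖ ≤ dist(a, K_Λ)·‖x‖. (ℤ₊-instance of Proposition 4.1 of the paper.) -/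
open Filter Topology

/-!
The seminorm `lim ‖Tⁿ x‖` comes from a semi-inner product for which `T` is isometric. On the
completion `Y`, `T` induces an isometry `V`, and every operator commuting with `T` induces one as
well, so `σ(V) ⊆ σ(T)`. If `σ(T)` misses a point of the circle, so does `σ(V)`, hence `V` is unitary
and `∑ b n • V ^ n` vanishes as soon as `b ∈ ℓ¹(ℤ)` has a Fourier series vanishing on `σ(T) ∩ 𝕋`.
Otherwise `b = 0` by uniqueness of Fourier coefficients. In both cases `b` may be subtracted from
`a` before applying the triangle inequality in `Y`.
-/

section Semiconj

variable {𝕜 X Y : Type*} [NontriviallyNormedField 𝕜] [SeminormedAddCommGroup X] [NormedSpace 𝕜 X]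
  [NormedAddCommGroup Y] [NormedSpace 𝕜 Y]

lemma mul_eq_one_of_semiconj {p : X → Y} (hp : DenseRange p) {R R' : X →L[𝕜] X}
    {S S' : Y →L[𝕜] Y} (hS : Function.Semiconj p R S) (hS' : Function.Semiconj p R' S')
    (h : R * R' = 1) : S * S' = 1 := by
  refine DFunLike.coe_injective
    (hp.equalizer (S * S').continuous (1 : Y →L[𝕜] Y).continuous (funext fun x => ?_))
  calc S (S' (p x)) = p ((R * R') x) := by rw [← hS', ← hS]; rfl
    _ = p x := by rw [h, one_apply_eq_self]

lemma spectrum_subset_of_semiconj {p : X →L[𝕜] Y} (hp : DenseRange p) {T : X →L[𝕜] X}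
    {V : Y →L[𝕜] Y} (hV : Function.Semiconj p T V)
    (hlift : ∀ R : X →L[𝕜] X, Commute R T → ∃ S : Y →L[𝕜] Y, Function.Semiconj p R S) :
    spectrum 𝕜 V ⊆ spectrum 𝕜 T := by
  intro z
  contrapose
  rw [spectrum.notMem_iff, spectrum.notMem_iff]
  rintro ⟨u, hu⟩
  have hu_comm : Commute (u : X →L[𝕜] X) T :=
    hu ▸ (Algebra.commute_algebraMap_left z T).sub_left (Commute.refl T)
  have hzV : Function.Semiconj p (u : X →L[𝕜] X) ⇑(algebraMap 𝕜 (Y →L[𝕜] Y) z - V) := fun x => by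
    simp [hu, Algebra.algebraMap_eq_smul_one, hV.eq x]
  obtain ⟨S, hS⟩ := hlift _ hu_comm.units_inv_left
  exact ⟨⟨_, S, mul_eq_one_of_semiconj hp hzV hS u.mul_inv,
    mul_eq_one_of_semiconj hp hS hzV u.inv_mul⟩, rfl⟩

end Semiconj

section IsometricAsymptote

variable {𝕜 X Y : Type*} [NontriviallyNormedField 𝕜] [SeminormedAddCommGroup X] [NormedSpace 𝕜 X]
  [NormedAddCommGroup Y] [NormedSpace 𝕜 Y]

/-- `p : X → Y` is an isometric asymptote of the operator `T`: it has dense range and turns the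
asymptotic seminorm `lim ‖Tⁿ x‖` into the norm of `Y`. -/
structure IsIsometricAsymptote (T : X →L[𝕜] X) (p : X →L[𝕜] Y) : Prop where
  denseRange : DenseRange p
  tendsto_norm_pow_apply (x : X) : Tendsto (fun n : ℕ => ‖(T ^ n) x‖) atTop (𝓝 ‖p x‖)

namespace IsIsometricAsymptote

variable {T : X →L[𝕜] X} {p : X →L[𝕜] Y}

lemma norm_apply_le_of_commute (hp : IsIsometricAsymptote T p) {R : X →L[𝕜] X} (hR : Commute R T)
    (x : X) : ‖p (R x)‖ ≤ ‖R‖ * ‖p x‖ := by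
  refine le_of_tendsto_of_tendsto' (hp.tendsto_norm_pow_apply (R x))
    ((hp.tendsto_norm_pow_apply x).const_mul ‖R‖) fun n => ?_
  calc ‖(T ^ n) (R x)‖ = ‖R ((T ^ n) x)‖ := congrArg (‖· x‖) (hR.pow_right n).eq.symm
    _ ≤ ‖R‖ * ‖(T ^ n) x‖ := R.le_opNorm _

lemma exists_semiconj [CompleteSpace Y] (hp : IsIsometricAsymptote T p) {R : X →L[𝕜] X}
    (hR : Commute R T) : ∃ S : Y →L[𝕜] Y, Function.Semiconj p R S :=
  ⟨(p ∘L R).toLinearMap.extendOfNorm p.toLinearMap, fun x =>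
    (LinearMap.extendOfNorm_eq (f := (p ∘L R).toLinearMap) (e := p.toLinearMap) hp.denseRange
      ⟨‖R‖, hp.norm_apply_le_of_commute hR⟩ x).symm⟩

lemma norm_apply_map (hp : IsIsometricAsymptote T p) (x : X) : ‖p (T x)‖ = ‖p x‖ :=
  tendsto_nhds_unique (hp.tendsto_norm_pow_apply (T x)) <|
    ((tendsto_add_atTop_iff_nat 1).mpr (hp.tendsto_norm_pow_apply x)).congr fun n => by
      rw [pow_succ, mul_apply_eq_comp]

lemma norm_apply_pow (hp : IsIsometricAsymptote T p) (n : ℕ) (x : X) :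
    ‖p ((T ^ n) x)‖ = ‖p x‖ := by
  induction n with
  | zero => rw [pow_zero, one_apply_eq_self]
  | succ n ih => rw [pow_succ', mul_apply_eq_comp, hp.norm_apply_map, ih]

lemma norm_map_of_semiconj (hp : IsIsometricAsymptote T p) {V : Y →L[𝕜] Y}
    (hV : Function.Semiconj p T V) (y : Y) : ‖V y‖ = ‖y‖ :=
  congrFun (hp.denseRange.equalizer V.continuous.norm continuous_norm <| funext fun x =>
    show ‖V (p x)‖ = ‖p x‖ by rw [← hV, hp.norm_apply_map]) y

end IsIsometricAsymptote

end IsometricAsymptote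

section AsymptoticSpace

lemma antitone_norm_pow_apply {𝕜 X : Type*} [NontriviallyNormedField 𝕜] [SeminormedAddCommGroup X]
    [NormedSpace 𝕜 X] {T : X →L[𝕜] X} (hT : ‖T‖ ≤ 1) (x : X) :
    Antitone fun n : ℕ => ‖(T ^ n) x‖ :=
  antitone_nat_of_succ_le fun n => by
    rw [pow_succ', mul_apply_eq_comp]
    exact (T.le_of_opNorm_le hT _).trans_eq (one_mul _)

variable {𝕜 X : Type*} [RCLike 𝕜] [SeminormedAddCommGroup X] [InnerProductSpace 𝕜 X]
  (T : X →L[𝕜] X)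

/-- The semi-inner product `lim ⟪Tⁿ x, Tⁿ y⟫`; the limit exists when `T` is a contraction. -/
noncomputable def asymptoticInner (x y : X) : 𝕜 :=
  limUnder atTop fun n : ℕ => inner 𝕜 ((T ^ n) x) ((T ^ n) y)

variable {T}

lemma tendsto_asymptoticInner (hT : ‖T‖ ≤ 1) (x y : X) :
    Tendsto (fun n : ℕ => inner 𝕜 ((T ^ n) x) ((T ^ n) y)) atTop
      (𝓝 (asymptoticInner T x y)) := by
  have norm_sq_tendsto (z : X) : Tendsto (fun n : ℕ => (‖(T ^ n) z‖ : 𝕜) ^ 2) atTop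
      (𝓝 ((⨅ n : ℕ, ‖(T ^ n) z‖ : ℝ) ^ 2 : 𝕜)) :=
    ((RCLike.continuous_ofReal.tendsto _).comp (tendsto_atTop_ciInf (antitone_norm_pow_apply hT z)
      ⟨0, Set.forall_mem_range.mpr fun _ => norm_nonneg _⟩)).pow 2
  have polarization := (((norm_sq_tendsto (x + y)).sub (norm_sq_tendsto (x - y))).add
    (((norm_sq_tendsto (x - (RCLike.I : 𝕜) • y)).sub
      (norm_sq_tendsto (x + (RCLike.I : 𝕜) • y))).mul_const RCLike.I)).div_const 4
  refine tendsto_nhds_limUnder ⟨_, polarization.congr fun n => ?_⟩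
  simp only [inner_eq_sum_norm_sq_div_four (𝕜 := 𝕜) ((T ^ n) x), map_add, map_sub, map_smul]

variable (hT : ‖T‖ ≤ 1)

/-- `asymptoticInner` as a pre-inner product. -/
noncomputable abbrev asymptoticCore : PreInnerProductSpace.Core 𝕜 X where
  inner := asymptoticInner T
  conj_inner_symm x y := tendsto_nhds_unique
    (((RCLike.continuous_conj.tendsto _).comp (tendsto_asymptoticInner hT y x)).congr fun _ =>
      inner_conj_symm _ _) (tendsto_asymptoticInner hT x y)
  re_inner_nonneg x := ge_of_tendsto'
    ((RCLike.continuous_re.tendsto _).comp (tendsto_asymptoticInner hT x x)) fun _ =>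
      inner_self_nonneg (𝕜 := 𝕜)
  add_left x y z := tendsto_nhds_unique (tendsto_asymptoticInner hT _ _) <|
    ((tendsto_asymptoticInner hT x z).add (tendsto_asymptoticInner hT y z)).congr fun _ => by
      rw [map_add, inner_add_left]
  smul_left x y r := tendsto_nhds_unique (tendsto_asymptoticInner hT _ _) <|
    ((tendsto_asymptoticInner hT x y).const_mul (starRingEnd 𝕜 r)).congr fun _ => by
      rw [map_smul, inner_smul_left]

/-- A copy of `X` carrying the semi-inner product `asymptoticInner T` of the contraction `T`. -/
def AsymptoticSpace (_ : ‖T‖ ≤ 1) : Type _ := X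

noncomputable instance : AddCommGroup (AsymptoticSpace hT) := inferInstanceAs (AddCommGroup X)

noncomputable instance : Module 𝕜 (AsymptoticSpace hT) := inferInstanceAs (Module 𝕜 X)

noncomputable instance : PreInnerProductSpace.Core 𝕜 (AsymptoticSpace hT) :=
  asymptoticCore (X := X) hT

noncomputable instance : SeminormedAddCommGroup (AsymptoticSpace hT) :=
  InnerProductSpace.Core.toSeminormedAddCommGroup (𝕜 := 𝕜)

noncomputable instance : InnerProductSpace 𝕜 (AsymptoticSpace hT) :=
  InnerProductSpace.ofCore inferInstance

/-- The identity of `X`, with the asymptotic seminorm on the target. -/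
def toAsymptoticSpace : X →ₗ[𝕜] AsymptoticSpace hT := LinearMap.id

lemma tendsto_norm_toAsymptoticSpace (x : X) :
    Tendsto (fun n : ℕ => ‖(T ^ n) x‖) atTop (𝓝 ‖toAsymptoticSpace hT x‖) :=
  ((RCLike.continuous_re.tendsto _).comp (tendsto_asymptoticInner hT x x)).sqrt.congr fun _ =>
    (norm_eq_sqrt_re_inner (𝕜 := 𝕜) _).symm

lemma norm_toAsymptoticSpace_le (x : X) : ‖toAsymptoticSpace hT x‖ ≤ ‖x‖ := by
  simpa using (antitone_norm_pow_apply hT x).le_of_tendsto (tendsto_norm_toAsymptoticSpace hT x) 0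

/-- The canonical map of `X` into the completion of its asymptotic seminorm. -/
noncomputable def toAsymptote : X →L[𝕜] UniformSpace.Completion (AsymptoticSpace hT) :=
  UniformSpace.Completion.toComplL (𝕜 := 𝕜) ∘L
    (toAsymptoticSpace hT).mkContinuous 1 fun x => by
      simpa using norm_toAsymptoticSpace_le hT x

lemma norm_toAsymptote (x : X) : ‖toAsymptote hT x‖ = ‖toAsymptoticSpace hT x‖ :=
  UniformSpace.Completion.norm_coe _

lemma isIsometricAsymptote_toAsymptote : IsIsometricAsymptote T (toAsymptote hT) where
  denseRange := UniformSpace.Completion.denseRange_coe (α := AsymptoticSpace hT)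
  tendsto_norm_pow_apply x := by
    simpa only [norm_toAsymptote] using tendsto_norm_toAsymptoticSpace hT x

end AsymptoticSpace

section Unitary

lemma mem_unitary_of_star_mul_self_of_notMem_spectrum {𝕜 A : Type*} [RCLike 𝕜] [Ring A] [StarRing A]
    [Algebra 𝕜 A] [StarModule 𝕜 A] {v : A} (hv : star v * v = 1) {z : 𝕜} (hz : ‖z‖ = 1)
    (hzv : z ∉ spectrum 𝕜 v) : v ∈ unitary A := by
  have star_mul_z : star z * z = 1 := by
    rw [RCLike.star_def, RCLike.conj_mul, hz, RCLike.ofReal_one, one_pow]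
  have star_resolvent : star (algebraMap 𝕜 A z - v) =
      -(algebraMap 𝕜 A (star z) * star v) * (algebraMap 𝕜 A z - v) := by
    rw [star_sub, ← algebraMap_star_comm, neg_mul, mul_assoc, mul_sub, mul_sub, hv, mul_one,
      ← Algebra.commutes z (star v), ← mul_assoc, ← map_mul, star_mul_z, map_one, one_mul, neg_sub]
  have resolvent_unit : IsUnit (algebraMap 𝕜 A z - v) := spectrum.notMem_iff.mp hzv
  have smul_star_unit : IsUnit (algebraMap 𝕜 A (star z) * star v) := by
    rw [← IsUnit.neg_iff, ← resolvent_unit.mul_right_iff, ← star_resolvent]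
    exact resolvent_unit.star
  have star_unit : IsUnit (star v) :=
    (((IsUnit.of_mul_eq_one _ star_mul_z).map (algebraMap 𝕜 A)).mul_left_iff).mp smul_star_unit
  exact (isUnit_star.mp star_unit).mem_unitary_of_star_mul_self hv

variable {A : Type*} [CStarAlgebra A] {b : ℤ → ℂ}

lemma hasSum_smul_zpow_cfc (u : unitary A) (hb : Summable fun n => ‖b n‖) :
    HasSum (fun n : ℤ => b n • ((u ^ n : unitary A) : A))
      (cfc (fun z : ℂ => ∑' n : ℤ, b n * z ^ n) (u : A)) := by
  have norm_eq_one {z : ℂ} (hz : z ∈ spectrum ℂ (u : A)) : ‖z‖ = 1 :=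
    spectrum.norm_eq_one_of_unitary u.2 hz
  have continuousOn_zpow (n : ℤ) : ContinuousOn (fun z : ℂ => z ^ n) (spectrum ℂ (u : A)) :=
    continuousOn_id.zpow₀ n fun z hz => .inl (norm_ne_zero_iff.mp (by simp [norm_eq_one hz]))
  have continuousOn_term (n : ℤ) : ContinuousOn (fun z : ℂ => b n * z ^ n) (spectrum ℂ (u : A)) :=
    (continuousOn_zpow n).const_mul (b n)
  have cfc_term (n : ℤ) :
      cfc (fun z : ℂ => b n * z ^ n) (u : A) = b n • ((u ^ n : unitary A) : A) := by
    rw [cfc_const_mul _ _ _ (continuousOn_zpow n)]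
    exact congrArg _ ((cfc_zpow (Unitary.toUnits u) n).trans
      (congrArg Units.val (map_zpow Unitary.toUnits u n).symm))
  have norm_term_le (n : ℤ) (z : ℂ) (hz : z ∈ spectrum ℂ (u : A)) : ‖b n * z ^ n‖ ≤ ‖b n‖ := by
    simp [norm_eq_one hz]
  refine Tendsto.congr (fun F => ?_)
    (tendsto_cfc_fun (tendstoUniformlyOn_tsum hb norm_term_le) (.of_forall fun F => ?_))
  · rw [← Finset.sum_fn, cfc_sum _ _ _ fun n _ => continuousOn_term n]
    exact Finset.sum_congr rfl fun n _ => cfc_term n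
  · exact continuousOn_finsetSum F fun n _ => continuousOn_term n

lemma hasSum_smul_zpow_zero_of_forall_mem_spectrum (u : unitary A) (hb : Summable fun n => ‖b n‖)
    (h : ∀ z ∈ spectrum ℂ (u : A), ∑' n : ℤ, b n * z ^ n = 0) :
    HasSum (fun n : ℤ => b n • ((u ^ n : unitary A) : A)) 0 := by
  simpa only [cfc_congr h, cfc_const_zero] using hasSum_smul_zpow_cfc u hb

end Unitary

section FourierUniqueness

lemma inner_eq_of_orthonormal_of_hasSum {𝕜 E ι : Type*} [RCLike 𝕜] [SeminormedAddCommGroup E]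
    [InnerProductSpace 𝕜 E] {v : ι → E} (hv : Orthonormal 𝕜 v) {c : ι → 𝕜} {x : E}
    (hx : HasSum (fun i => c i • v i) x) (j : ι) : inner 𝕜 (v j) x = c j := by
  classical
  have hj : HasSum (fun i => inner 𝕜 (v j) (c i • v i)) (inner 𝕜 (v j) x) :=
    hx.mapL (innerSL 𝕜 (v j))
  simp only [inner_smul_right, orthonormal_iff_ite.mp hv, mul_ite, mul_one, mul_zero] at hj
  exact hj.unique (by simpa using hasSum_single j fun i hij => if_neg hij.symm)

lemma eq_zero_of_forall_tsum_mul_zpow_eq_zero {b : ℤ → ℂ} (hb : Summable fun n => ‖b n‖)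
    (h : ∀ z : ℂ, ‖z‖ = 1 → ∑' n : ℤ, b n * z ^ n = 0) : b = 0 := by
  have series_summable : Summable fun n => b n • (fourier n : C(AddCircle (1 : ℝ), ℂ)) :=
    .of_norm (by simpa only [norm_smul, fourier_norm, mul_one] using hb)
  have series_eq_zero : ∑' n, b n • (fourier n : C(AddCircle (1 : ℝ), ℂ)) = 0 := by
    ext t
    rw [← ContinuousMap.tsum_apply series_summable]
    simpa [fourier_apply, AddCircle.toCircle_zsmul] using
      h (AddCircle.toCircle t) (Circle.norm_coe _)
  have series_hasSum_zero := series_eq_zero ▸ series_summable.hasSum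
  have series_hasSum_L2 := series_hasSum_zero.mapL
    (ContinuousMap.toLp (E := ℂ) 2 (AddCircle.haarAddCircle (T := (1 : ℝ))) ℂ)
  simp only [map_smul, map_zero] at series_hasSum_L2
  funext n
  rw [← inner_eq_of_orthonormal_of_hasSum orthonormal_fourier series_hasSum_L2 n, inner_zero_right,
    Pi.zero_apply]

end FourierUniqueness

lemma norm_le_tsum_norm_sub_mul_of_hasSum {𝕜 E ι : Type*} [NormedField 𝕜]
    [SeminormedAddCommGroup E] [NormedSpace 𝕜 E] {c b : ι → 𝕜} {w : ι → E} {C : ℝ} {y : E}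
    (hcb : Summable fun i => ‖c i - b i‖) (hw : ∀ i, ‖w i‖ ≤ C)
    (hc : HasSum (fun i => c i • w i) y) (hb : HasSum (fun i => b i • w i) 0) :
    ‖y‖ ≤ (∑' i, ‖c i - b i‖) * C := by
  refine HasSum.norm_le_of_bounded (sub_zero y ▸ hc.sub hb) (hcb.hasSum.mul_right C) fun i => ?_
  rw [← sub_smul, norm_smul]
  gcongr
  exact hw i

lemma hasSum_int_iff_hasSum_nat {M : Type*} [AddCommMonoid M] [TopologicalSpace M] {f : ℤ → M}
    (hf : ∀ n < 0, f n = 0) {s : M} : HasSum f s ↔ HasSum (fun n : ℕ => f n) s :=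
  ((Nat.cast_injective (R := ℤ)).hasSum_iff fun n hn => hf n <| not_le.mp fun h =>
    hn ⟨n.toNat, Int.toNat_of_nonneg h⟩).symm

section Hilbert

variable {X Y : Type*} [SeminormedAddCommGroup X] [NormedAddCommGroup Y] [CompleteSpace Y]

namespace IsIsometricAsymptote

lemma exists_unitary_semiconj {𝕜 : Type*} [RCLike 𝕜] [NormedSpace 𝕜 X] [InnerProductSpace 𝕜 Y]
    {T : X →L[𝕜] X} {p : X →L[𝕜] Y} (hp : IsIsometricAsymptote T p) {z : 𝕜} (hz : ‖z‖ = 1)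
    (hzT : z ∉ spectrum 𝕜 T) :
    ∃ u : unitary (Y →L[𝕜] Y), Function.Semiconj p T (u : Y →L[𝕜] Y) ∧
      spectrum 𝕜 (u : Y →L[𝕜] Y) ⊆ spectrum 𝕜 T := by
  obtain ⟨V, hV⟩ := hp.exists_semiconj (Commute.refl T)
  have spectrum_subset : spectrum 𝕜 V ⊆ spectrum 𝕜 T :=
    spectrum_subset_of_semiconj hp.denseRange hV fun _ => hp.exists_semiconj
  have isometry : star V * V = 1 :=
    V.norm_map_iff_adjoint_comp_self.mp (hp.norm_map_of_semiconj hV)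
  exact ⟨⟨V, mem_unitary_of_star_mul_self_of_notMem_spectrum isometry hz
    (Set.notMem_subset spectrum_subset hzT)⟩, hV, spectrum_subset⟩

variable [NormedSpace ℂ X] [InnerProductSpace ℂ Y] {T : X →L[ℂ] X} {p : X →L[ℂ] Y}

lemma exists_bilateral_orbit (hp : IsIsometricAsymptote T p) {b : ℤ → ℂ}
    (hb : Summable fun n => ‖b n‖)
    (hbT : ∀ z ∈ spectrum ℂ T, ‖z‖ = 1 → ∑' n : ℤ, b n * z ^ n = 0) (x : X) :
    ∃ w : ℤ → Y, (∀ n : ℕ, w n = p ((T ^ n) x)) ∧ (∀ n, ‖w n‖ = ‖p x‖) ∧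
      HasSum (fun n => b n • w n) 0 := by
  by_cases hT : ∃ z : ℂ, ‖z‖ = 1 ∧ z ∉ spectrum ℂ T
  · obtain ⟨z, hz, hzT⟩ := hT
    obtain ⟨u, hu, spectrum_subset⟩ := hp.exists_unitary_semiconj hz hzT
    refine ⟨fun n => ((u ^ n : unitary (Y →L[ℂ] Y)) : Y →L[ℂ] Y) (p x), fun n => ?_,
      fun n => Unitary.norm_map (u ^ n) (p x), ?_⟩
    · simpa using (hu.iterate_right n x).symm
    · exact (hasSum_smul_zpow_zero_of_forall_mem_spectrum u hb fun z hz =>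
        hbT z (spectrum_subset hz) (spectrum.norm_eq_one_of_unitary u.2 hz)).mapL
          (ContinuousLinearMap.apply ℂ Y (p x))
  · push Not at hT
    obtain rfl := eq_zero_of_forall_tsum_mul_zpow_eq_zero hb fun z hz => hbT z (hT z hz) hz
    exact ⟨fun n => p ((T ^ n.toNat) x), fun n => rfl, fun n => hp.norm_apply_pow _ x,
      by simp only [Pi.zero_apply, zero_smul, hasSum_zero]⟩

lemma norm_apply_le_of_hasSum (hp : IsIsometricAsymptote T p) {a : ℕ → ℂ}
    (ha : Summable fun n => ‖a n‖) {b : ℤ → ℂ} (hb : Summable fun n => ‖b n‖)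
    (hbT : ∀ z ∈ spectrum ℂ T, ‖z‖ = 1 → ∑' n : ℤ, b n * z ^ n = 0) {x y : X}
    (hy : HasSum (fun n : ℕ => a n • (T ^ n) x) y) :
    ‖p y‖ ≤ (∑' n : ℤ, ‖(if 0 ≤ n then a n.toNat else 0) - b n‖) * ‖p x‖ := by
  obtain ⟨w, hw, norm_w, sum_b⟩ := hp.exists_bilateral_orbit hb hbT x
  have ha' : Summable fun n : ℤ => ‖if 0 ≤ n then a n.toNat else 0‖ :=
    ((hasSum_int_iff_hasSum_nat fun n hn => by simp [hn.not_ge]).mpr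
      (by simpa only [Nat.cast_nonneg, if_true, Int.toNat_natCast] using ha.hasSum)).summable
  have sum_a : HasSum (fun n : ℤ => (if 0 ≤ n then a n.toNat else 0) • w n) (p y) :=
    (hasSum_int_iff_hasSum_nat fun n hn => by simp [hn.not_ge]).mpr
      (by simpa [hw] using hy.mapL p)
  exact norm_le_tsum_norm_sub_mul_of_hasSum
    (.of_nonneg_of_le (fun _ => norm_nonneg _) (fun _ => norm_sub_le _ _) (ha'.add hb))
    (fun n => (norm_w n).le) sum_a sum_b

end IsIsometricAsymptote

end Hilbert

lemma summable_smul_pow_of_norm_le_one {𝕜 X : Type*} [NontriviallyNormedField 𝕜]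
    [NormedAddCommGroup X] [NormedSpace 𝕜 X] [CompleteSpace X] {T : X →L[𝕜] X} (hT : ‖T‖ ≤ 1)
    {a : ℕ → 𝕜} (ha : Summable fun n => ‖a n‖) : Summable fun n : ℕ => a n • T ^ n := by
  refine .of_norm_bounded ha fun n => ?_
  have norm_pow_le : ‖T ^ n‖ ≤ 1 := ContinuousLinearMap.opNorm_le_bound _ zero_le_one fun x => by
    simpa using antitone_norm_pow_apply hT x (Nat.zero_le n)
  exact (norm_smul_le _ _).trans (mul_le_of_le_one_right (norm_nonneg _) norm_pow_le)

theorem stmt_11_general {X : Type*} [SeminormedAddCommGroup X] [InnerProductSpace ℂ X]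
    (T : X →L[ℂ] X) (hT : ‖T‖ ≤ 1) (a : ℕ → ℂ) (ha : Summable fun n : ℕ => ‖a n‖) {x y : X}
    (hy : HasSum (fun m : ℕ => a m • (T ^ m) x) y) :
    limsup (fun n : ℕ => ‖(T ^ n) y‖) atTop ≤
      sInf { r : ℝ | ∃ b : ℤ → ℂ, (Summable fun n : ℤ => ‖b n‖) ∧
          (∀ lam ∈ spectrum ℂ T, ‖lam‖ = 1 → (∑' n : ℤ, b n * lam ^ n) = 0) ∧
          r = ∑' n : ℤ, ‖(if 0 ≤ n then a n.toNat else 0) - b n‖ } * ‖x‖ := by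
  have asymptote := isIsometricAsymptote_toAsymptote hT
  rw [(asymptote.tendsto_norm_pow_apply y).limsup_eq, mul_comm, ← smul_eq_mul,
    ← Real.sInf_smul_of_nonneg (norm_nonneg x)]
  refine le_csInf (Set.Nonempty.smul_set ⟨_, 0, by simp, by simp, rfl⟩) ?_
  rintro _ ⟨_, ⟨b, hb, hbT, rfl⟩, rfl⟩
  calc ‖toAsymptote hT y‖
      ≤ (∑' n : ℤ, ‖(if 0 ≤ n then a n.toNat else 0) - b n‖) * ‖toAsymptote hT x‖ :=
        asymptote.norm_apply_le_of_hasSum ha hb hbT hy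
    _ ≤ (∑' n : ℤ, ‖(if 0 ≤ n then a n.toNat else 0) - b n‖) * ‖x‖ := by
        rw [norm_toAsymptote]
        gcongr
        exact norm_toAsymptoticSpace_le hT x
    _ = ‖x‖ • ∑' n : ℤ, ‖(if 0 ≤ n then a n.toNat else 0) - b n‖ := mul_comm _ _

/-- ℤ₊-instance of Proposition 4.1: if `T` is a contraction on a complex Hilbert space,
`Λ := σ(T) ∩ 𝕋` and `a ∈ ℓ¹(ℕ)`, then for every `x ∈ X`,
`limsup_n ‖Tⁿ â(T) x‖ ≤ dist(a, K_Λ)·‖x‖`, where `K_Λ` is the set of `b ∈ ℓ¹(ℤ)` whose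
Fourier transform vanishes on `Λ` and `a` is viewed in `ℓ¹(ℤ)` by extension by zero. -/
theorem stmt_11 {X : Type*} [NormedAddCommGroup X] [InnerProductSpace ℂ X] [CompleteSpace X]
    (T : X →L[ℂ] X) (hT : ‖T‖ ≤ 1)
    (a : ℕ → ℂ) (ha : Summable fun n : ℕ => ‖a n‖) :
    ∀ x : X,
      Filter.limsup (fun n : ℕ => ‖(T ^ n) ((∑' m : ℕ, a m • T ^ m) x)‖) atTop ≤
        sInf { r : ℝ | ∃ b : ℤ → ℂ, (Summable fun n : ℤ => ‖b n‖) ∧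
            (∀ lam ∈ spectrum ℂ T, ‖lam‖ = 1 → (∑' n : ℤ, b n * lam ^ n) = 0) ∧
            r = ∑' n : ℤ, ‖(if 0 ≤ n then a n.toNat else 0) - b n‖ } * ‖x‖ := by
  intro x
  exact stmt_11_general T hT a ha
    ((summable_smul_pow_of_norm_le_one hT ha).hasSum.mapL (ContinuousLinearMap.apply ℂ X x))
end
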